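/- arXiv:2106.08949 — 3 statements merged into one kernel-verified Lean document; each statement's English description precedes it below -/
import Mathlib

section
/- Let d ≥ 1 be an integer, p ∈ [1,∞), and for λ > 0 let w(λ) be the weight sequence w_n(λ) = 1 + λ/n for n ≥ 1. Then the family (B_{w(λ₁)} × ⋯ × B_{w(λ_d)})_{λ∈(0,∞)^d} admits a common hypercyclic algebra on ℓp(ℕ)^d for the coordinatewise product. -/
open scoped ENNReal
open Finset

noncomputable section

/-- The space `ℓᵖ(ℕ)` of `p`-summable complex sequences. -/
abbrev lpC (p : ℝ≥0∞) : Type := lp (fun _ : ℕ => ℂ) p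

/-- `T` is the product operator `B_{w(lam 0)} × ⋯ × B_{w(lam (d-1))}` of weighted backward
shifts, the weight sequence of the `i`-th factor being `(w (lam i) n)_{n ≥ 1}`. -/
def IsProductShift (p : ℝ≥0∞) [Fact (1 ≤ p)] (d : ℕ) (w : ℝ → ℕ → ℝ)
    (T : (Fin d → lpC p) →L[ℂ] (Fin d → lpC p)) (lam : Fin d → ℝ) : Prop :=
  ∀ (v : Fin d → lpC p) (i : Fin d) (n : ℕ),
    (T v) i n = (w (lam i) (n + 1) : ℂ) * v i (n + 1)

/-- The family `T lam`, `lam ∈ S`, admits a common hypercyclic algebra for the coordinatewise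
product: there is a non-unital subalgebra `A ≠ {0}` of `(ℓᵖ(ℕ))^d` (closed under addition,
scalar multiplication and the componentwise coordinatewise product) every nonzero element of
which is a common hypercyclic vector for the family. -/
def CommonHypercyclicAlgebraCW (p : ℝ≥0∞) [Fact (1 ≤ p)] (d : ℕ) (S : Set (Fin d → ℝ))
    (T : (Fin d → ℝ) → ((Fin d → lpC p) →L[ℂ] (Fin d → lpC p))) : Prop :=
  ∃ A : Set (Fin d → lpC p),
    (0 : Fin d → lpC p) ∈ A ∧
    (∀ x ∈ A, ∀ y ∈ A, x + y ∈ A) ∧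
    (∀ (c : ℂ), ∀ x ∈ A, c • x ∈ A) ∧
    (∀ x ∈ A, ∀ y ∈ A, ∃ z ∈ A, ∀ (i : Fin d) (n : ℕ), z i n = x i n * y i n) ∧
    (∃ x ∈ A, x ≠ 0) ∧
    (∀ x ∈ A, x ≠ 0 → ∀ lam ∈ S, Dense (Set.range fun n : ℕ => ((T lam) ^ (n + 1)) x))

/-- Product of weights. -/
def WW (a : ℝ) (k n : ℕ) : ℝ := ∏ l ∈ range n, (1 + a / ((k + l + 1 : ℕ) : ℝ))

lemma WW_pos {a : ℝ} (ha : 0 ≤ a) (k n : ℕ) : 0 < WW a k n :=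
  Finset.prod_pos fun l _ => by positivity

lemma WW_add (a : ℝ) (k n n' : ℕ) : WW a k (n + n') = WW a k n * WW a (k + n) n' := by
  unfold WW
  rw [Finset.prod_range_add]
  congr 1
  apply Finset.prod_congr rfl
  intro l _
  rw [add_assoc k n l]

lemma WW_le_exp {a : ℝ} (ha : 0 ≤ a) (k n : ℕ) : WW a k n ≤ Real.exp (a * n) := by
  have h : WW a k n ≤ ∏ l ∈ range n, Real.exp a := by
    apply Finset.prod_le_prod
    · intro l _; positivity
    · intro l _
      have h1 : a / ((k + l + 1 : ℕ) : ℝ) ≤ a := by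
        apply div_le_self ha
        exact_mod_cast Nat.le_add_left 1 _
      have := Real.add_one_le_exp a
      linarith
  rw [Finset.prod_const, card_range, ← Real.exp_nat_mul] at h
  rwa [mul_comm]

lemma prod_tele (k n : ℕ) : ∏ l ∈ range n, (1 + 1 / ((k + l + 1 : ℕ) : ℝ)) = ((n + k + 1 : ℕ) : ℝ) / ((k + 1 : ℕ) : ℝ) := by
  induction n with
  | zero => simp; field_simp
  | succ n ih =>
    rw [Finset.prod_range_succ, ih]
    push_cast
    field_simp
    ring

lemma WW_pow_lower {lam : ℝ} {s : ℕ} (hs : 1 ≤ s) (hl : 1 / (s : ℝ) ≤ lam) (k n : ℕ) :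
    ((n + k + 1 : ℕ) : ℝ) / ((k + 1 : ℕ) : ℝ) ≤ WW lam k n ^ s := by
  rw [← prod_tele]
  unfold WW
  rw [← Finset.prod_pow]
  apply Finset.prod_le_prod
  · intro l _; positivity
  · intro l _
    have hs' : (0 : ℝ) < s := by exact_mod_cast hs
    have hx : (0 : ℝ) < ((k + l + 1 : ℕ) : ℝ) := by positivity
    have hl0 : 0 < lam := lt_of_lt_of_le (by positivity) hl
    have h2 : (0 : ℝ) ≤ lam / ((k + l + 1 : ℕ) : ℝ) := by positivity
    have h1 := one_add_mul_le_pow (a := lam / ((k + l + 1 : ℕ) : ℝ)) (by linarith) s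
    have h3 : 1 ≤ s * lam := by
      rw [div_le_iff₀ hs'] at hl; linarith
    have h4 : 1 / ((k + l + 1 : ℕ) : ℝ) ≤ s * (lam / ((k + l + 1 : ℕ) : ℝ)) := by
      rw [← mul_div_assoc]
      gcongr
    linarith

/-- if `n ≥ Q^s` then `W ≥ Q/N`. -/
lemma WW_lower {lam : ℝ} {s : ℕ} (hs : 1 ≤ s) (hl : 1 / (s : ℝ) ≤ lam) {k n N Q : ℕ}
    (hk : k < N) (hn : Q ^ s ≤ n) : (Q : ℝ) / N ≤ WW lam k n := by
  have hl0 : 0 < lam := lt_of_lt_of_le (by positivity) hl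
  have hN : (1 : ℝ) ≤ N := by exact_mod_cast (by omega : 1 ≤ N)
  apply le_of_pow_le_pow_left₀ (n := s) (by omega) (WW_pos hl0.le k n).le
  refine le_trans ?_ (WW_pow_lower hs hl k n)
  rw [div_pow]
  have h1 : ((k + 1 : ℕ) : ℝ) ≤ N := by exact_mod_cast hk
  have h2 : (N : ℝ) ≤ (N : ℝ) ^ s := le_self_pow₀ hN (by omega)
  have h3 : ((Q : ℝ)) ^ s ≤ ((n + k + 1 : ℕ) : ℝ) := by
    have : Q ^ s ≤ n + k + 1 := by omega
    exact_mod_cast this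
  apply div_le_div₀ (by positivity) h3 (by positivity)
  linarith

lemma sum_inv_le (k n : ℕ) :
    ∑ l ∈ range n, (1 / ((k + l + 1 : ℕ) : ℝ)) ≤ 1 + Real.log n := by
  have h := harmonic_le_one_add_log n
  refine le_trans ?_ h
  unfold harmonic
  push_cast
  apply Finset.sum_le_sum
  intro l _
  rw [one_div]
  apply inv_anti₀ (by positivity)
  have : (0:ℝ) ≤ k := by positivity
  linarith

lemma WW_ratio {lam mu eta : ℝ} (hl : 0 ≤ lam) (hm : 0 ≤ mu) (h : |lam - mu| ≤ eta) (k n : ℕ)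
    (hn : 1 ≤ n) : WW lam k n ≤ WW mu k n * Real.exp (eta * (1 + Real.log n)) := by
  have he : 0 ≤ eta := le_trans (abs_nonneg _) h
  have h1 : WW lam k n ≤ ∏ l ∈ range n, ((1 + mu / ((k + l + 1 : ℕ) : ℝ)) *
      Real.exp (eta * (1 / ((k + l + 1 : ℕ) : ℝ)))) := by
    apply Finset.prod_le_prod
    · intro l _; positivity
    · intro l _
      have hx : (0 : ℝ) < ((k + l + 1 : ℕ) : ℝ) := by positivity
      have h2 := Real.add_one_le_exp (eta * (1 / ((k + l + 1 : ℕ) : ℝ)))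
      have h3 : lam ≤ mu + eta := by linarith [(abs_le.mp h).2]
      have h0 : 0 ≤ mu / ((k + l + 1 : ℕ) : ℝ) := by positivity
      have h5 : 0 ≤ eta * (1 / ((k + l + 1 : ℕ) : ℝ)) := by positivity
      calc 1 + lam / ((k + l + 1 : ℕ) : ℝ) ≤ 1 + (mu + eta) / ((k + l + 1 : ℕ) : ℝ) := by gcongr
        _ = 1 + mu / ((k + l + 1 : ℕ) : ℝ) + eta * (1 / ((k + l + 1 : ℕ) : ℝ)) := by ring
        _ ≤ (1 + mu / ((k + l + 1 : ℕ) : ℝ)) * (eta * (1 / ((k + l + 1 : ℕ) : ℝ)) + 1) := by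
            nlinarith [mul_nonneg h0 h5]
        _ ≤ _ := by gcongr
  rw [Finset.prod_mul_distrib, ← Real.exp_sum, ← Finset.mul_sum] at h1
  refine h1.trans ?_
  have := WW_pos hm k n
  have h6 := sum_inv_le k n
  unfold WW at *
  gcongr

/-- the class of functions -/
def FC (m D : ℕ) (f : ℂ → ℂ) : Prop :=
  f 0 = 0 ∧ (∀ s t, ‖f s - f t‖ ≤ D * (1 + ‖s‖ + ‖t‖) ^ D * ‖s - t‖) ∧
    ∀ s, ‖s‖ ≤ 1 → ‖f s - s ^ m‖ ≤ D * ‖s‖ ^ (m + 1)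

lemma poly_lip (P : Polynomial ℂ) : ∃ D : ℕ, ∀ s t : ℂ,
    ‖P.eval s - P.eval t‖ ≤ D * (1 + ‖s‖ + ‖t‖) ^ D * ‖s - t‖ := by
  induction P using Polynomial.induction_on with
  | C a => exact ⟨0, by simp⟩
  | add p q hp hq =>
    obtain ⟨D, hD⟩ := hp
    obtain ⟨E, hE⟩ := hq
    refine ⟨D + E, fun s t => ?_⟩
    have h1 : 1 ≤ 1 + ‖s‖ + ‖t‖ := by linarith [norm_nonneg s, norm_nonneg t]
    have e : (p + q).eval s - (p + q).eval t = (p.eval s - p.eval t) + (q.eval s - q.eval t) := by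
      simp; ring
    rw [e]
    refine (norm_add_le _ _).trans ((add_le_add (hD s t) (hE s t)).trans ?_)
    push_cast
    rw [add_mul, add_mul]
    gcongr
    · omega
    · omega
  | monomial n a ih =>
    obtain ⟨D, hD⟩ := ih
    obtain ⟨K, hK⟩ := exists_nat_ge ‖a‖
    refine ⟨D + K + n + 1, fun s t => ?_⟩
    have h1 : 1 ≤ 1 + ‖s‖ + ‖t‖ := by linarith [norm_nonneg s, norm_nonneg t]
    set L := 1 + ‖s‖ + ‖t‖ with hL
    have hDst := hD s t
    simp only [Polynomial.eval_mul, Polynomial.eval_C, Polynomial.eval_pow, Polynomial.eval_X]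
      at hDst ⊢
    have e : a * s ^ (n + 1) - a * t ^ (n + 1) = (a * s ^ n - a * t ^ n) * s + a * t ^ n * (s - t) := by
      ring
    rw [e]
    refine (norm_add_le _ _).trans ?_
    rw [norm_mul, norm_mul, norm_mul, norm_pow]
    have hs : ‖s‖ ≤ L := by linarith [norm_nonneg t]
    have ht : ‖t‖ ≤ L := by linarith [norm_nonneg s]
    calc _ ≤ (D * L ^ D * ‖s - t‖) * L + K * L ^ n * ‖s - t‖ := by gcongr
      _ = D * L ^ (D + 1) * ‖s - t‖ + K * L ^ n * ‖s - t‖ := by ring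
      _ ≤ D * L ^ (D + K + n + 1) * ‖s - t‖ + K * L ^ (D + K + n + 1) * ‖s - t‖ := by
          gcongr
          · omega
          · omega
      _ = (D + K) * L ^ (D + K + n + 1) * ‖s - t‖ := by ring
      _ ≤ _ := by
          have h7 : ((D : ℝ) + K) ≤ ((D + K + n + 1 : ℕ) : ℝ) := by
            push_cast
            have : (0:ℝ) ≤ n := by positivity
            linarith
          have hL0 : 0 ≤ L := by linarith
          exact mul_le_mul_of_nonneg_right (mul_le_mul_of_nonneg_right h7 (pow_nonneg hL0 _))
            (norm_nonneg _)

lemma FC_mono {m D E : ℕ} (h : D ≤ E) {f : ℂ → ℂ} (hf : FC m D f) : FC m E f := by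
  obtain ⟨h0, h1, h2⟩ := hf
  refine ⟨h0, fun s t => (h1 s t).trans ?_, fun s hs => (h2 s hs).trans ?_⟩
  · have : 1 ≤ 1 + ‖s‖ + ‖t‖ := by linarith [norm_nonneg s, norm_nonneg t]
    gcongr
  · gcongr

lemma poly_FC (P : Polynomial ℂ) (hP : P ≠ 0) (h0 : P.coeff 0 = 0) :
    ∃ m D : ℕ, ∃ c : ℂ, c ≠ 0 ∧ 1 ≤ m ∧ FC m D (fun s => c⁻¹ * P.eval s) := by
  obtain ⟨Q, hQ, hnd⟩ := Polynomial.exists_eq_pow_rootMultiplicity_mul_and_not_dvd P hP 0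
  set m := P.rootMultiplicity 0 with hm
  rw [Polynomial.dvd_iff_isRoot, Polynomial.IsRoot.def] at hnd
  have hP0 : P.eval 0 = 0 := by rw [← Polynomial.coeff_zero_eq_eval_zero, h0]
  have hm1 : 1 ≤ m := (Polynomial.rootMultiplicity_pos hP).2 hP0
  obtain ⟨E, hE⟩ := poly_lip Q
  set c := Q.eval 0 with hc
  obtain ⟨D, hD⟩ := poly_lip (Polynomial.C c⁻¹ * P)
  obtain ⟨K, hK⟩ := exists_nat_ge (‖c⁻¹‖ * (E * 2 ^ E))
  refine ⟨m, D + K, c, hnd, hm1, by simp [hP0], ?_, ?_⟩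
  · intro s t
    have := hD s t
    simp only [Polynomial.eval_mul, Polynomial.eval_C] at this
    refine this.trans ?_
    have : 1 ≤ 1 + ‖s‖ + ‖t‖ := by linarith [norm_nonneg s, norm_nonneg t]
    gcongr <;> omega
  · intro s hs
    have e : c⁻¹ * P.eval s - s ^ m = c⁻¹ * (s ^ m * (Q.eval s - Q.eval 0)) := by
      rw [hQ, ← hc]
      simp
      field_simp
    have h3 := hE s 0
    simp only [norm_zero, add_zero, sub_zero] at h3
    simp only
    rw [e, norm_mul, norm_mul, norm_pow]
    calc ‖c⁻¹‖ * (‖s‖ ^ m * ‖Q.eval s - Q.eval 0‖)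
        ≤ ‖c⁻¹‖ * (‖s‖ ^ m * (E * (1 + ‖s‖) ^ E * ‖s‖)) := by gcongr
      _ ≤ ‖c⁻¹‖ * (‖s‖ ^ m * (E * 2 ^ E * ‖s‖)) := by
          gcongr; linarith
      _ = ‖c⁻¹‖ * (E * 2 ^ E) * ‖s‖ ^ (m + 1) := by ring
      _ ≤ K * ‖s‖ ^ (m + 1) := by gcongr
      _ ≤ _ := by gcongr; omega

/-- an `m`-th root -/
lemma exists_root (m : ℕ) (hm : 1 ≤ m) : ∃ r : ℂ → ℂ, ∀ z, r z ^ m = z := by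
  have h : ∀ z : ℂ, ∃ w, w ^ m = z := fun z => IsAlgClosed.exists_pow_nat_eq z (by omega)
  choose r hr using h
  exact ⟨r, hr⟩

/-- the block vector -/
def blk (r : ℂ → ℂ) (R q : ℕ) (Lam : ℕ → ℝ) (v x0 : ℕ → ℂ) (h : ℕ) : ℂ :=
  if h / R = 0 then x0 h else
    if h / R ≤ q then r (v (h % R) / (WW (Lam (h / R)) (h % R) ((h / R) * R) : ℂ)) else 0

section scalar

variable {s m d M N D : ℕ} {r : ℂ → ℂ} {V : ℝ} {Lam : ℕ → ℝ} {v x0 : ℕ → ℂ} {alpha : ℝ}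
  {f : ℂ → ℂ}

lemma root_zero (hm : 1 ≤ m) (hr : ∀ z, r z ^ m = z) : r 0 = 0 := by
  have := hr 0
  exact pow_eq_zero_iff (by omega) |>.1 this

lemma blk_zero (hm : 1 ≤ m) (hr : ∀ z, r z ^ m = z) (hv : ∀ k, N ≤ k → v k = 0) {R q h : ℕ}
    (h1 : 1 ≤ h / R) (h2 : q < h / R ∨ N ≤ h % R) : blk r R q Lam v x0 h = 0 := by
  unfold blk
  rw [if_neg (by omega)]
  split_ifs with h3
  · rw [hv _ (by omega), zero_div, root_zero hm hr]
  · rfl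

lemma blk_bound (hs : 1 ≤ s) (hm : 1 ≤ m) (hr : ∀ z, r z ^ m = z)
    (hal : 1 / (s : ℝ) ≤ alpha) (hL : ∀ i, alpha ≤ Lam i) (hv : ∀ k, N ≤ k → v k = 0)
    (hV : ∀ k, ‖v k‖ ≤ V) {G q h : ℕ} (hG : 1 ≤ G) (h1 : 1 ≤ h / (G ^ m) ^ s) :
    ‖blk r ((G ^ m) ^ s) q Lam v x0 h‖ ≤ (V * N + 1) / G := by
  have hV0 : 0 ≤ V := (norm_nonneg _).trans (hV 0)
  by_cases h2 : q < h / (G ^ m) ^ s ∨ N ≤ h % (G ^ m) ^ s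
  · rw [blk_zero hm hr hv h1 h2, norm_zero]
    positivity
  push Not at h2
  unfold blk
  rw [if_neg (by omega), if_pos h2.1]
  set R := (G ^ m) ^ s with hR
  set w := WW (Lam (h / R)) (h % R) ((h / R) * R)
  have hw : ((G ^ m : ℕ) : ℝ) / N ≤ w :=
    WW_lower hs (hal.trans (hL _)) h2.2 (by rw [← hR]; exact Nat.le_mul_of_pos_left _ h1)
  have hN : (0 : ℝ) < N := by exact_mod_cast (by omega : 0 < N)
  have hG' : (0 : ℝ) < G := by exact_mod_cast hG
  have hw0 : 0 < w := lt_of_lt_of_le (by positivity) hw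
  apply le_of_pow_le_pow_left₀ (n := m) (by omega) (by positivity)
  rw [← norm_pow, hr, norm_div, Complex.norm_real, Real.norm_of_nonneg hw0.le, div_pow]
  have h4 : V * N + 1 ≤ (V * N + 1) ^ m := le_self_pow₀ (by nlinarith [mul_nonneg hV0 hN.le]) (by omega)
  calc ‖v (h % R)‖ / w ≤ V / (((G ^ m : ℕ) : ℝ) / N) := by
        gcongr
        exact hV _
    _ = (V * N) / (G : ℝ) ^ m := by push_cast; field_simp
    _ ≤ _ := by gcongr; linarith

lemma FC_bound (hf : FC m D f) {z : ℂ} (hz : ‖z‖ ≤ 1) : ‖f z‖ ≤ (D + 1) * ‖z‖ ^ m := by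
  have h := hf.2.2 z hz
  have h2 : ‖f z‖ ≤ ‖f z - z ^ m‖ + ‖z ^ m‖ := by
    simpa using norm_add_le (f z - z ^ m) (z ^ m)
  have h3 : (D : ℝ) * ‖z‖ ^ (m + 1) ≤ D * ‖z‖ ^ m := by
    gcongr ?_ * ?_
    exact pow_le_pow_of_le_one (norm_nonneg _) hz (by omega)
  rw [norm_pow] at h2
  linarith

lemma cross_zero (hm : 1 ≤ m) (hr : ∀ z, r z ^ m = z) (hv : ∀ k, N ≤ k → v k = 0)
    (hf : FC m D f) {R q h j : ℕ} (hR : 1 ≤ R) (hj : 1 ≤ j) {lam : ℝ}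
    (h2 : q < h / R ∨ N ≤ h % R) :
    (WW lam h (j * R) : ℂ) * f (blk r R q Lam v x0 (h + j * R)) = 0 := by
  have e1 : (h + j * R) / R = h / R + j := Nat.add_mul_div_right _ _ hR
  have e2 : (h + j * R) % R = h % R := Nat.add_mul_mod_self_right _ _ _
  rw [blk_zero hm hr hv (by rw [e1]; exact le_add_left hj) (by rw [e1, e2]; omega), hf.1, mul_zero]

lemma cross_bound (hs : 1 ≤ s) (hm : 1 ≤ m) (hr : ∀ z, r z ^ m = z)
    (hal : 1 / (s : ℝ) ≤ alpha) (hL : ∀ i, alpha ≤ Lam i) (hv : ∀ k, N ≤ k → v k = 0)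
    (hV : ∀ k, ‖v k‖ ≤ V) {G q h j : ℕ} (hG : 1 ≤ G) (hf : FC m D f)
    (hsmall : (V * N + 1) / G ≤ 1)
    {lam delta : ℝ} (hlam : alpha ≤ lam) (hd : ∀ i, |lam - Lam i| ≤ delta)
    (h1 : 1 ≤ h / (G ^ m) ^ s) (hj : 1 ≤ j) :
    ‖(WW lam h (j * (G ^ m) ^ s) : ℂ) * f (blk r ((G ^ m) ^ s) q Lam v x0 (h + j * (G ^ m) ^ s))‖
      ≤ (D + 1) * V * N * Real.exp (delta * (1 + Real.log ((q : ℝ) * (((G ^ m) ^ s : ℕ) : ℝ)))) / (G : ℝ) ^ m := by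
  have hV0 : 0 ≤ V := (norm_nonneg _).trans (hV 0)
  have hd0 : 0 ≤ delta := (abs_nonneg _).trans (hd 0)
  set R := (G ^ m) ^ s with hR
  have hR1 : 1 ≤ R := Nat.one_le_iff_ne_zero.2 (by positivity)
  have e1 : (h + j * R) / R = h / R + j := Nat.add_mul_div_right _ _ hR1
  have e2 : (h + j * R) % R = h % R := Nat.add_mul_mod_self_right _ _ _
  by_cases h2 : q < h / R + j ∨ N ≤ h % R
  · rw [blk_zero hm hr hv (by omega) (by rw [e1, e2]; omega), hf.1, mul_zero, norm_zero]
    positivity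
  push Not at h2
  have hs0 : (0 : ℝ) < s := by exact_mod_cast hs
  have hl0 : 0 < lam := lt_of_lt_of_le (by positivity) (hal.trans hlam)
  have hL0 : ∀ i, 0 < Lam i := fun i => lt_of_lt_of_le (by positivity) (hal.trans (hL i))
  have hb := blk_bound (x0 := x0) (q := q) (h := h + j * R) hs hm hr hal hL hv hV hG
    (by rw [← hR, e1]; omega)
  rw [← hR] at hb
  have hfb := FC_bound hf (hb.trans hsmall)
  rw [norm_mul, Complex.norm_real, Real.norm_of_nonneg (WW_pos hl0.le _ _).le]
  have hbm : ‖blk r R q Lam v x0 (h + j * R)‖ ^ m =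
      ‖v (h % R)‖ / WW (Lam (h / R + j)) (h % R) ((h / R + j) * R) := by
    unfold blk
    rw [e1, e2, if_neg (by omega), if_pos h2.1, ← norm_pow, hr, norm_div, Complex.norm_real,
      Real.norm_of_nonneg (WW_pos (hL0 _).le _ _).le]
  rw [hbm] at hfb
  set i := h / R + j
  set k := h % R
  set w' := WW (Lam i) k (i * R)
  have hw' : 0 < w' := WW_pos (hL0 _).le _ _
  have hk : k + h / R * R = h := by rw [mul_comm]; exact Nat.mod_add_div _ _
  have hadd : WW lam k (i * R) = WW lam k (h / R * R) * WW lam h (j * R) := by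
    have := WW_add lam k (h / R * R) (j * R)
    rw [hk, ← add_mul] at this
    exact this
  have hlow : ((G ^ m : ℕ) : ℝ) / N ≤ WW lam k (h / R * R) :=
    WW_lower hs (hal.trans hlam) h2.2 (by rw [← hR]; exact Nat.le_mul_of_pos_left _ h1)
  have hiR : 1 ≤ i * R := Nat.one_le_iff_ne_zero.2 (by
    have : 1 ≤ i := by omega
    positivity)
  have hrat := WW_ratio hl0.le (hL0 i).le (hd i) k (i * R) hiR
  have hlog : Real.log ((i * R : ℕ) : ℝ) ≤ Real.log ((q : ℝ) * (R : ℝ)) := by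
    apply Real.log_le_log (by exact_mod_cast hiR)
    push_cast
    gcongr
    exact h2.1
  set E := Real.exp (delta * (1 + Real.log ((q : ℝ) * (R : ℝ)))) with hE
  have hrat2 : WW lam k (i * R) ≤ w' * E := by
    refine hrat.trans ?_
    rw [hE]
    gcongr
  have hN : (0 : ℝ) < N := by exact_mod_cast (by omega : 0 < N)
  have hG' : (0 : ℝ) < G := by exact_mod_cast hG
  set u := WW lam h (j * R)
  have hu : 0 < u := WW_pos hl0.le _ _
  have hkey : (G : ℝ) ^ m / N * u ≤ w' * E := by
    push_cast at hlow
    calc _ ≤ WW lam k (h / R * R) * u := by gcongr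
      _ ≤ _ := by rw [← hadd]; exact hrat2
  have hkey2 : u / w' ≤ N * E / (G : ℝ) ^ m := by
    rw [div_le_div_iff₀ hw' (by positivity)]
    rw [div_mul_eq_mul_div, div_le_iff₀ hN] at hkey
    linarith
  calc u * ‖f (blk r R q Lam v x0 (h + j * R))‖ ≤ u * ((D + 1) * (V / w')) := by
        gcongr
        refine hfb.trans ?_
        gcongr
        exact hV k
    _ = (D + 1) * V * (u / w') := by ring
    _ ≤ (D + 1) * V * (N * E / (G : ℝ) ^ m) := by gcongr
    _ = _ := by ring

lemma diag_bound (hs : 1 ≤ s) (hm : 1 ≤ m) (hr : ∀ z, r z ^ m = z)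
    (hal : 1 / (s : ℝ) ≤ alpha) (hL : ∀ i, alpha ≤ Lam i) (hv : ∀ k, N ≤ k → v k = 0)
    (hV : ∀ k, ‖v k‖ ≤ V) {G q h j : ℕ} (hG : 1 ≤ G) (hf : FC m D f)
    (hsmall : (V * N + 1) / G ≤ 1)
    {lam eta : ℝ} (hlam : alpha ≤ lam) (hd : |lam - Lam j| ≤ eta)
    (h1 : h < (G ^ m) ^ s) (hj : 1 ≤ j) (hjq : j ≤ q) {tau : ℝ}
    (htau : eta * (1 + Real.log ((q : ℝ) * (((G ^ m) ^ s : ℕ) : ℝ))) ≤ tau) :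
    ‖(WW lam h (j * (G ^ m) ^ s) : ℂ) * f (blk r ((G ^ m) ^ s) q Lam v x0 (h + j * (G ^ m) ^ s)) - v h‖
      ≤ (Real.exp tau - 1) * V + Real.exp tau * (D * V * ((V * N + 1) / G)) := by
  have hV0 : 0 ≤ V := (norm_nonneg _).trans (hV 0)
  have hd0 : 0 ≤ eta := (abs_nonneg _).trans hd
  set R := (G ^ m) ^ s with hR
  have hR1 : 1 ≤ R := Nat.one_le_iff_ne_zero.2 (by positivity)
  have e1 : (h + j * R) / R = j := by
    rw [Nat.add_mul_div_right _ _ hR1, Nat.div_eq_of_lt h1, zero_add]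
  have e2 : (h + j * R) % R = h := by
    rw [Nat.add_mul_mod_self_right, Nat.mod_eq_of_lt h1]
  have hl0 : 0 < lam := lt_of_lt_of_le (by positivity) (hal.trans hlam)
  have hL0 : ∀ i, 0 < Lam i := fun i => lt_of_lt_of_le (by positivity) (hal.trans (hL i))
  have hb := blk_bound (x0 := x0) (q := q) (h := h + j * R) hs hm hr hal hL hv hV hG
    (by rw [← hR, e1]; omega)
  rw [← hR] at hb
  have hfb := hf.2.2 _ (hb.trans hsmall)
  have hbm : blk r R q Lam v x0 (h + j * R) ^ m = v h / (WW (Lam j) h (j * R) : ℂ) := by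
    unfold blk
    rw [e1, e2, if_neg (by omega), if_pos hjq, hr]
  set b := blk r R q Lam v x0 (h + j * R)
  set u := WW lam h (j * R)
  set w := WW (Lam j) h (j * R)
  have hu : 0 < u := WW_pos hl0.le _ _
  have hw : 0 < w := WW_pos (hL0 j).le _ _
  have hwc : (w : ℂ) ≠ 0 := by exact_mod_cast hw.ne'
  have hjR : 1 ≤ j * R := Nat.one_le_iff_ne_zero.2 (by positivity)
  have hlog : Real.log ((j * R : ℕ) : ℝ) ≤ Real.log ((q : ℝ) * (R : ℝ)) := by
    apply Real.log_le_log (by exact_mod_cast hjR)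
    push_cast
    gcongr
  have hE : Real.exp (eta * (1 + Real.log ((j * R : ℕ) : ℝ))) ≤ Real.exp tau := by
    apply Real.exp_le_exp.2
    refine le_trans ?_ htau
    gcongr
  set E := Real.exp tau
  have hE0 : 0 < E := Real.exp_pos _
  have hr1 : u ≤ w * E := (WW_ratio hl0.le (hL0 j).le hd h (j * R) hjR).trans (by gcongr)
  have hr2 : w ≤ u * E := (WW_ratio (eta := eta) (hL0 j).le hl0.le (by rwa [abs_sub_comm]) h (j * R) hjR).trans
    (by gcongr)
  have hq1 : u / w ≤ E := by rw [div_le_iff₀ hw]; linarith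
  have hq2 : w / u ≤ E := by rw [div_le_iff₀ hu]; linarith
  have hq0 : 0 < u / w := by positivity
  have hq3 : |u / w - 1| ≤ E - 1 := by
    rw [abs_le]
    constructor
    · have h5 : 1 ≤ (u / w) * E := by
        rw [div_mul_eq_mul_div, le_div_iff₀ hw]; linarith
      nlinarith [mul_self_nonneg (u / w - 1), mul_self_nonneg (E - 1)]
    · linarith
  have e : (u : ℂ) * f b - v h = ((u / w - 1 : ℝ) : ℂ) * v h + (u : ℂ) * (f b - b ^ m) := by
    rw [hbm]
    push_cast
    field_simp
    ring
  rw [e]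
  refine (norm_add_le _ _).trans ?_
  rw [norm_mul, norm_mul, Complex.norm_real, Complex.norm_real, Real.norm_of_nonneg hu.le,
    Real.norm_eq_abs]
  have hbn : ‖b‖ ^ m = ‖v h‖ / w := by
    rw [← norm_pow, hbm, norm_div, Complex.norm_real, Real.norm_of_nonneg hw.le]
  have hE1 : 0 ≤ E - 1 := (abs_nonneg _).trans hq3
  have : u * ‖f b - b ^ m‖ ≤ E * (D * V * ((V * N + 1) / G)) := by
    calc u * ‖f b - b ^ m‖ ≤ u * (D * ‖b‖ ^ (m + 1)) := by gcongr
      _ = u * (D * (‖v h‖ / w * ‖b‖)) := by rw [pow_succ, hbn]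
      _ = (u / w) * (D * ‖v h‖ * ‖b‖) := by ring
      _ ≤ E * (D * V * ((V * N + 1) / G)) := by
          gcongr
          exact hV h
  have : |u / w - 1| * ‖v h‖ ≤ (E - 1) * V := by
    gcongr
    exact hV h
  linarith

end scalar

lemma asym (s m d N D : ℕ) (hs : 1 ≤ s) (hm : 1 ≤ m) (V : ℝ) (hV : 0 ≤ V) (ε : ℝ) (hε : 0 < ε) :
    ∃ M : ℕ, 1 ≤ M ∧ N ≤ M ∧ (V * N + 1) / ((M ^ (4 * d + 4) : ℕ) : ℝ) ≤ 1 ∧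
      ((M : ℝ) ^ d + 1) * N * ((V * N + 1) / ((M ^ (4 * d + 4) : ℕ) : ℝ)) < ε ∧
      ∃ tau : ℝ, 1 / (2 * s) / (M : ℝ) *
          (1 + Real.log (((M ^ d : ℕ) : ℝ) * ((((M ^ (4 * d + 4)) ^ m) ^ s : ℕ) : ℝ))) ≤ tau ∧
        N * ((Real.exp tau - 1) * V + Real.exp tau * (D * V * ((V * N + 1) / ((M ^ (4 * d + 4) : ℕ) : ℝ)))) +
          ((M : ℝ) ^ d + 1) * N * ((D + 1) * V * N * Real.exp (1 / (2 * s) *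
            (1 + Real.log (((M ^ d : ℕ) : ℝ) * ((((M ^ (4 * d + 4)) ^ m) ^ s : ℕ) : ℝ)))) /
              ((M ^ (4 * d + 4) : ℕ) : ℝ) ^ m) < ε := by
  set c : ℝ := ((d + (4 * d + 4) * m * s : ℕ) : ℝ) with hc
  have hs1 : (1 : ℝ) ≤ s := by exact_mod_cast hs
  have hinv : Filter.Tendsto (fun M : ℕ => 1 / (M : ℝ)) Filter.atTop (nhds 0) :=
    tendsto_one_div_atTop_nhds_zero_nat
  have hlogM : Filter.Tendsto (fun M : ℕ => Real.log M / (M : ℝ)) Filter.atTop (nhds 0) :=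
    (Real.isLittleO_log_id_atTop.tendsto_div_nhds_zero).comp tendsto_natCast_atTop_atTop
  have htau : Filter.Tendsto (fun M : ℕ => 1 / (M : ℝ) + c * (Real.log M / (M : ℝ))) Filter.atTop
      (nhds 0) := by
    simpa using hinv.add (hlogM.const_mul c)
  have hexp : Filter.Tendsto (fun M : ℕ => Real.exp (1 / (M : ℝ) + c * (Real.log M / (M : ℝ))))
      Filter.atTop (nhds 1) := by
    have h := (Real.continuous_exp.tendsto 0).comp htau
    rw [Real.exp_zero] at h
    exact h
  have ht1 : Filter.Tendsto (fun M : ℕ => 2 * N * (V * N + 1) * (1 / (M : ℝ))) Filter.atTop (nhds 0) := by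
    simpa using hinv.const_mul (2 * N * (V * N + 1))
  have ht2 : Filter.Tendsto (fun M : ℕ => (V * N + 1) * (1 / (M : ℝ))) Filter.atTop (nhds 0) := by
    simpa using hinv.const_mul (V * N + 1)
  have ht3 : Filter.Tendsto (fun M : ℕ =>
      N * ((Real.exp (1 / (M : ℝ) + c * (Real.log M / (M : ℝ))) - 1) * V +
        Real.exp (1 / (M : ℝ) + c * (Real.log M / (M : ℝ))) * (D * V * ((V * N + 1) * (1 / (M : ℝ))))) +
        6 * N * ((D + 1) * V * N) * (1 / (M : ℝ))) Filter.atTop (nhds 0) := by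
    have h1 := ((hexp.sub_const 1).mul_const V).add (hexp.mul (ht2.const_mul (D * V)))
    have h2 := (h1.const_mul (N : ℝ)).add (hinv.const_mul (6 * N * ((D + 1) * V * N)))
    simpa using h2
  obtain ⟨M, hM1, hMN, h1, h2, h3⟩ := ((Filter.eventually_ge_atTop 1).and
    ((Filter.eventually_ge_atTop N).and ((ht1.eventually (gt_mem_nhds hε)).and
      ((ht2.eventually (gt_mem_nhds one_pos)).and (ht3.eventually (gt_mem_nhds hε)))))).exists
  have hMr : (1 : ℝ) ≤ M := by exact_mod_cast hM1
  have hM0 : (0 : ℝ) < M := by linarith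
  have hlog0 : 0 ≤ Real.log M := Real.log_nonneg hMr
  have hGM : (M : ℝ) ≤ ((M ^ (4 * d + 4) : ℕ) : ℝ) := by
    push_cast; exact le_self_pow₀ hMr (by omega)
  have hlogeq : Real.log (((M ^ d : ℕ) : ℝ) * ((((M ^ (4 * d + 4)) ^ m) ^ s : ℕ) : ℝ)) =
      c * Real.log M := by
    rw [hc, ← Real.log_pow]
    congr 1
    push_cast
    rw [← pow_mul, ← pow_mul, ← pow_add, mul_assoc]
  have hNV : 0 ≤ V * N + 1 := by positivity
  have hfr : (V * N + 1) / ((M ^ (4 * d + 4) : ℕ) : ℝ) ≤ (V * N + 1) * (1 / (M : ℝ)) := by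
    rw [mul_one_div]
    gcongr
  have hMd : (1 : ℝ) ≤ (M : ℝ) ^ d := one_le_pow₀ hMr
  have hc0 : 0 ≤ c := by positivity
  refine ⟨M, hM1, hMN, hfr.trans h2.le, ?_, 1 / (M : ℝ) + c * (Real.log M / (M : ℝ)), ?_, ?_⟩
  · refine lt_of_le_of_lt ?_ h1
    calc ((M : ℝ) ^ d + 1) * N * ((V * N + 1) / ((M ^ (4 * d + 4) : ℕ) : ℝ))
        ≤ (2 * (M : ℝ) ^ d) * N * ((V * N + 1) / ((M ^ (d + 1) : ℕ) : ℝ)) := by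
          push_cast
          gcongr
          · linarith
          · omega
          · omega
      _ = _ := by push_cast; rw [pow_succ]; field_simp
  · rw [hlogeq]
    have : 1 / (2 * (s : ℝ)) ≤ 1 := by
      rw [div_le_one (by positivity)]; linarith
    calc 1 / (2 * s) / (M : ℝ) * (1 + c * Real.log M) ≤ 1 / (M : ℝ) * (1 + c * Real.log M) := by
          gcongr
      _ = _ := by field_simp
  · refine lt_of_le_of_lt ?_ h3
    rw [hlogeq]
    have hexp1 : Real.exp (1 / (2 * s) * (1 + c * Real.log M)) ≤ 3 * (M : ℝ) ^ (d + m * (2 * d + 2)) := by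
      have e1 : 1 / (2 * (s : ℝ)) ≤ 1 := by
        rw [div_le_one (by positivity)]; linarith
      have e2 : 1 / (2 * (s : ℝ)) * c ≤ ((d + m * (2 * d + 2) : ℕ) : ℝ) := by
        rw [hc]
        have : 1 / (2 * (s : ℝ)) * ((d + (4 * d + 4) * m * s : ℕ) : ℝ) =
          1 / (2 * (s : ℝ)) * d + m * (2 * d + 2) := by push_cast; field_simp; ring
        rw [this]
        push_cast
        have : 1 / (2 * (s : ℝ)) * d ≤ 1 * d := by gcongr
        linarith
      have e3 : 1 / (2 * s) * (1 + c * Real.log M) ≤ 1 + ((d + m * (2 * d + 2) : ℕ) : ℝ) * Real.log M := by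
        have := mul_le_mul_of_nonneg_right e2 hlog0
        nlinarith
      refine (Real.exp_le_exp.2 e3).trans ?_
      rw [Real.exp_add, Real.exp_nat_mul, Real.exp_log hM0]
      gcongr
      exact Real.exp_one_lt_three.le
    have hA : 0 ≤ Real.exp (1 / (M : ℝ) + c * (Real.log M / (M : ℝ))) - 1 := by
      rw [sub_nonneg]; exact Real.one_le_exp (by positivity)
    refine add_le_add (by gcongr) ?_
    calc ((M : ℝ) ^ d + 1) * N * ((D + 1) * V * N * Real.exp (1 / (2 * s) * (1 + c * Real.log M)) /
              ((M ^ (4 * d + 4) : ℕ) : ℝ) ^ m)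
        ≤ (2 * (M : ℝ) ^ d) * N * ((D + 1) * V * N * (3 * (M : ℝ) ^ (d + m * (2 * d + 2))) /
              ((M : ℝ) ^ (d + (d + m * (2 * d + 2)) + 1))) := by
          have hp : (M : ℝ) ^ (d + (d + m * (2 * d + 2)) + 1) ≤ ((M ^ (4 * d + 4) : ℕ) : ℝ) ^ m := by
            push_cast
            rw [← pow_mul]
            apply pow_le_pow_right₀ hMr
            nlinarith
          gcongr
          linarith
      _ = _ := by
          rw [pow_succ (M : ℝ) (d + _), pow_add (M : ℝ) d (d + _)]
          field_simp
          ring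

lemma grid (d M : ℕ) (hM : 1 ≤ M) (delta : ℝ) (hd : 0 < delta) (alpha : Fin d → ℝ) :
    ∃ Lam : ℕ → Fin d → ℝ, (∀ i t, alpha t ≤ Lam i t ∧ Lam i t ≤ alpha t + delta) ∧
      ∀ lam : Fin d → ℝ, (∀ t, alpha t ≤ lam t ∧ lam t ≤ alpha t + delta) →
        ∃ i, 1 ≤ i ∧ i ≤ M ^ d ∧ ∀ t, |lam t - Lam i t| ≤ delta / M := by
  have hM0 : (0 : ℝ) < M := by exact_mod_cast hM
  let g : (Fin d → Fin M) ≃ Fin (M ^ d) := finFunctionFinEquiv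
  refine ⟨fun i t => if h : i - 1 < M ^ d then
    alpha t + delta * ((g.symm ⟨i - 1, h⟩ t : ℕ) : ℝ) / M else alpha t, ?_, ?_⟩
  · intro i t
    dsimp only
    split_ifs with h
    · have h1 : ((g.symm ⟨i - 1, h⟩ t : ℕ) : ℝ) ≤ M := by
        exact_mod_cast (g.symm ⟨i - 1, h⟩ t).2.le
      constructor
      · have : 0 ≤ delta * ((g.symm ⟨i - 1, h⟩ t : ℕ) : ℝ) / M := by positivity
        linarith
      · have : delta * ((g.symm ⟨i - 1, h⟩ t : ℕ) : ℝ) / M ≤ delta := by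
          rw [div_le_iff₀ hM0]; gcongr
        linarith
    · constructor <;> linarith
  · intro lam hlam
    have hex : ∀ t, ∃ k : Fin M, |lam t - (alpha t + delta * ((k : ℕ) : ℝ) / M)| ≤ delta / M := by
      intro t
      obtain ⟨h1, h2⟩ := hlam t
      set y := (lam t - alpha t) * M / delta with hy
      have hy0 : 0 ≤ y := by
        have : 0 ≤ lam t - alpha t := by linarith
        positivity
      have hyM : y ≤ M := by
        rw [hy, div_le_iff₀ hd]
        nlinarith
      have hl : lam t = alpha t + delta * y / M := by rw [hy]; field_simp; ring
      have key : ∀ k : ℕ, |y - k| ≤ 1 → |lam t - (alpha t + delta * (k : ℝ) / M)| ≤ delta / M := by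
        intro k hk
        have : lam t - (alpha t + delta * (k : ℝ) / M) = delta / M * (y - k) := by rw [hl]; ring
        rw [this, abs_mul, abs_of_pos (by positivity)]
        exact mul_le_of_le_one_right (by positivity) hk
      by_cases hlt : ⌊y⌋₊ < M
      · refine ⟨⟨⌊y⌋₊, hlt⟩, key _ ?_⟩
        have := Nat.floor_le hy0
        have := Nat.lt_floor_add_one y
        rw [abs_le]; constructor <;> linarith
      · refine ⟨⟨M - 1, by omega⟩, key _ ?_⟩
        have h3 : (M : ℝ) ≤ y := by
          have := Nat.floor_le hy0
          have h4 : (M : ℝ) ≤ ⌊y⌋₊ := by exact_mod_cast not_lt.1 hlt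
          linarith
        rw [Nat.cast_sub hM, abs_le]
        push_cast
        constructor <;> linarith
    choose k hk using hex
    refine ⟨(g k : ℕ) + 1, by omega, (g k).2, fun t => ?_⟩
    have : (g k : ℕ) + 1 - 1 < M ^ d := (g k).2
    dsimp only
    rw [dif_pos this]
    have e : (⟨(g k : ℕ) + 1 - 1, this⟩ : Fin (M ^ d)) = g k := Fin.ext (by simp)
    rw [e, Equiv.symm_apply_apply]
    exact hk t

section lpfacts

variable {p : ℝ≥0∞} [Fact (1 ≤ p)]

lemma p_pos : 0 < p := zero_lt_one.trans_le Fact.out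

lemma p_real (hp : p ≠ ⊤) : 0 < p.toReal := ENNReal.toReal_pos p_pos.ne' hp

lemma lp_le_shift (hp : p ≠ ⊤) (y z : lpC p) (C : ℝ) (hC : 0 ≤ C) (n : ℕ)
    (h : ∀ k, ‖y k‖ ≤ C * ‖z (k + n)‖) : ‖y‖ ≤ C * ‖z‖ := by
  apply lp.norm_le_of_forall_sum_le (p_real hp) (by positivity)
  intro S
  calc ∑ k ∈ S, ‖y k‖ ^ p.toReal ≤ ∑ k ∈ S, (C * ‖z (k + n)‖) ^ p.toReal := by
        apply Finset.sum_le_sum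
        intro k _
        exact Real.rpow_le_rpow (norm_nonneg _) (h k) (p_real hp).le
    _ = C ^ p.toReal * ∑ k ∈ S.map (addRightEmbedding n), ‖z k‖ ^ p.toReal := by
        rw [Finset.sum_map, Finset.mul_sum]
        apply Finset.sum_congr rfl
        intro k _
        rw [Real.mul_rpow hC (norm_nonneg _)]
        rfl
    _ ≤ C ^ p.toReal * ‖z‖ ^ p.toReal := by
        gcongr
        exact lp.sum_rpow_le_norm_rpow (p_real hp) z _
    _ = _ := by rw [Real.mul_rpow hC (norm_nonneg _)]

lemma sum_single_apply (S : Finset ℕ) (g : ℕ → ℂ) (k : ℕ) :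
    (∑ i ∈ S, lp.single p i (g i) : lpC p) k = if k ∈ S then g k else 0 := by
  rw [lp.coeFn_sum, Finset.sum_apply]
  simp only [lp.single_apply]
  rw [Finset.sum_pi_single]

lemma lp_fin (y : lpC p) (S : Finset ℕ) (h : ∀ k, k ∉ S → y k = 0) : ‖y‖ ≤ ∑ k ∈ S, ‖y k‖ := by
  have e : y = ∑ i ∈ S, lp.single p i (y i) := by
    ext k
    rw [sum_single_apply]
    split_ifs with hk
    · rfl
    · exact h k hk
  calc ‖y‖ = ‖(∑ i ∈ S, lp.single p i (y i) : lpC p)‖ := congrArg norm e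
    _ ≤ ∑ i ∈ S, ‖(lp.single p i (y i) : lpC p)‖ := norm_sum_le _ _
    _ = _ := by
      apply Finset.sum_congr rfl
      intro i _
      exact lp.norm_single p_pos _ _

/-- finitely supported vector from a function -/
def mkv (p : ℝ≥0∞) (N : ℕ) (g : ℕ → ℂ) : lpC p := ∑ i ∈ range N, lp.single p i (g i)

lemma mkv_apply (N : ℕ) (g : ℕ → ℂ) (k : ℕ) : mkv p N g k = if k < N then g k else 0 := by
  unfold mkv
  rw [sum_single_apply]
  simp

lemma exists_img (hp : p ≠ ⊤) (f : ℂ → ℂ) (h0 : f 0 = 0) (D : ℕ)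
    (hf : ∀ s t, ‖f s - f t‖ ≤ D * (1 + ‖s‖ + ‖t‖) ^ D * ‖s - t‖) (y : lpC p) :
    ∃ z : lpC p, ∀ h, z h = f (y h) := by
  have hb : ∀ h, ‖f (y h)‖ ≤ D * (1 + ‖y‖) ^ D * ‖y h‖ := by
    intro h
    have h1 := hf (y h) 0
    simp only [h0, sub_zero, norm_zero, add_zero] at h1
    refine h1.trans ?_
    have := lp.norm_apply_le_norm p_pos.ne' y h
    gcongr
  have hmem : Memℓp (fun h => f (y h)) p := by
    apply memℓp_gen
    have hs := (lp.memℓp y).summable (p_real hp)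
    refine Summable.of_nonneg_of_le (fun h => by positivity) (fun h => ?_)
      (hs.mul_left ((D * (1 + ‖y‖) ^ D) ^ p.toReal))
    rw [← Real.mul_rpow (by positivity) (norm_nonneg _)]
    exact Real.rpow_le_rpow (norm_nonneg _) (hb h) (p_real hp).le
  exact ⟨⟨_, hmem⟩, fun h => rfl⟩

lemma exists_img_pi {d : ℕ} (hp : p ≠ ⊤) (f : ℂ → ℂ) (h0 : f 0 = 0) (D : ℕ)
    (hf : ∀ s t, ‖f s - f t‖ ≤ D * (1 + ‖s‖ + ‖t‖) ^ D * ‖s - t‖) (y : Fin d → lpC p) :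
    ∃ z : Fin d → lpC p, ∀ t h, z t h = f (y t h) := by
  choose z hz using fun t => exists_img hp f h0 D hf (y t)
  exact ⟨z, hz⟩

/-- index of the countable dense family of targets -/
def tgt (p : ℝ≥0∞) {d : ℕ} (N : ℕ) (g : Fin d → ℕ →₀ ℕ) : Fin d → lpC p :=
  fun t => mkv p N (fun k => TopologicalSpace.denseSeq ℂ (g t k))

lemma tgt_supp {d : ℕ} (N : ℕ) (g : Fin d → ℕ →₀ ℕ) (t : Fin d) (k : ℕ) (h : N ≤ k) :
    tgt p N g t k = 0 := by
  unfold tgt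
  rw [mkv_apply, if_neg (by omega)]

lemma tgt_dense {d : ℕ} (hp : p ≠ ⊤) (y : Fin d → lpC p) (ε : ℝ) (hε : 0 < ε) :
    ∃ N g, ‖y - tgt p N g‖ < ε := by
  have h1 : ∀ t, ∀ᶠ N in Filter.atTop, ‖y t - mkv p N (y t)‖ < ε / 2 := by
    intro t
    have h := (lp.hasSum_single hp (y t)).tendsto_sum_nat
    have h2 := h.eventually (Metric.ball_mem_nhds (y t) (half_pos hε))
    filter_upwards [h2] with N hN
    rw [← dist_eq_norm, dist_comm]
    exact hN
  obtain ⟨N, hN⟩ := (Filter.eventually_all.2 h1).exists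
  have h2 : ∀ (t : Fin d) (k : ℕ), ∃ i : ℕ, ‖y t k - TopologicalSpace.denseSeq ℂ i‖ < ε / (2 * (N + 1)) := by
    intro t k
    obtain ⟨i, hi⟩ := (TopologicalSpace.denseRange_denseSeq ℂ).exists_dist_lt (y t k)
      (ε := ε / (2 * (N + 1))) (by positivity)
    exact ⟨i, by rwa [dist_eq_norm] at hi⟩
  choose G hG using h2
  obtain ⟨g0, hg0⟩ : ∃ g0 : Fin d → ℕ →₀ ℕ, ∀ t, ∀ k ∈ range N, g0 t k = G t k :=
    ⟨fun t => Finsupp.indicator (range N) (fun k _ => G t k), fun t k hk => Finsupp.indicator_of_mem hk _⟩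
  refine ⟨N, g0, ?_⟩
  rw [pi_norm_lt_iff hε]
  intro t
  have h3 : ‖mkv p N (y t) - tgt p N g0 t‖
      ≤ ε / 2 := by
    refine (lp_fin _ (range N) ?_).trans ?_
    · intro k hk
      have hk' : ¬ k < N := by simpa using hk
      rw [lp.coeFn_sub, Pi.sub_apply, mkv_apply, if_neg hk', tgt_supp _ _ _ _ (by omega), sub_zero]
    · calc _ ≤ ∑ k ∈ range N, ε / (2 * ((N : ℝ) + 1)) := by
            apply Finset.sum_le_sum
            intro k hk
            have hk' : k < N := by simpa using hk
            unfold tgt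
            rw [lp.coeFn_sub, Pi.sub_apply, mkv_apply, mkv_apply, if_pos hk', if_pos hk',
              hg0 t k hk]
            exact (hG t k).le
        _ = N * (ε / (2 * ((N : ℝ) + 1))) := by simp
        _ ≤ ε / 2 := by
            rw [mul_div_assoc', div_le_div_iff₀ (by positivity) (by positivity)]
            nlinarith
  calc ‖(y - tgt p N g0) t‖ = ‖(y t - mkv p N (y t)) + (mkv p N (y t) - tgt p N g0 t)‖ := by
        rw [Pi.sub_apply]; congr 1; abel
    _ ≤ _ := norm_add_le _ _
    _ < ε := by linarith [hN t]

lemma T_pow {d : ℕ} {T : (Fin d → lpC p) →L[ℂ] (Fin d → lpC p)} {lam : Fin d → ℝ}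
    (hT : IsProductShift p d (fun a n => 1 + a / (n : ℝ)) T lam) (n : ℕ) (z : Fin d → lpC p)
    (t : Fin d) (h : ℕ) : ((T ^ n) z) t h = (WW (lam t) h n : ℂ) * z t (h + n) := by
  induction n generalizing h with
  | zero => simp [WW]
  | succ n ih =>
    rw [pow_succ', mul_apply_eq_comp, hT, ih, add_comm n 1, WW_add]
    have : WW (lam t) h 1 = 1 + lam t / ((h + 1 : ℕ) : ℝ) := by simp [WW]
    rw [this, ← add_assoc]
    push_cast
    ring

lemma core {d : ℕ}
    (T : (Fin d → ℝ) → ((Fin d → lpC p) →L[ℂ] (Fin d → lpC p)))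
    (hT : ∀ lam : Fin d → ℝ, (∀ i, 0 < lam i) →
      IsProductShift p d (fun a n => 1 + a / (n : ℝ)) (T lam) lam)
    (s m D N : ℕ) (hs : 1 ≤ s) (hm : 1 ≤ m) (alpha : Fin d → ℝ)
    (hal : ∀ t, 1 / (s : ℝ) ≤ alpha t) (v x0 : Fin d → lpC p)
    (hv : ∀ t k, N ≤ k → v t k = 0) (hx0 : ∀ t k, N ≤ k → x0 t k = 0) (ε : ℝ) (hε : 0 < ε) :
    ∃ x : Fin d → lpC p, ‖x - x0‖ < ε ∧ ∃ L : ℕ, ∀ f, FC m D f → ∀ lam : Fin d → ℝ,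
      (∀ t, alpha t ≤ lam t ∧ lam t ≤ alpha t + 1 / (2 * s)) → ∀ z : Fin d → lpC p,
      (∀ t h, z t h = f (x t h)) → ∃ n < L, ‖((T lam) ^ (n + 1)) z - v‖ < ε := by
  have hs0 : (0 : ℝ) < s := by exact_mod_cast hs
  have hVt : ∀ t k, ‖v t k‖ ≤ ‖v‖ := fun t k =>
    (lp.norm_apply_le_norm p_pos.ne' (v t) k).trans (norm_le_pi_norm v t)
  obtain ⟨M, hM1, hMN, hsm, hA, tau, htau, hB⟩ := asym s m d N D hs hm ‖v‖ (norm_nonneg _) ε hε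
  set G := M ^ (4 * d + 4) with hG
  have hG1 : 1 ≤ G := Nat.one_le_pow _ _ hM1
  obtain ⟨r, hr⟩ := exists_root m hm
  obtain ⟨Lam, hLam, hgrid⟩ := grid d M hM1 (1 / (2 * s)) (by positivity) alpha
  set R := (G ^ m) ^ s with hR
  have hGR : G ≤ R := by
    rw [hR, ← pow_mul]
    exact Nat.le_self_pow (by positivity) _
  have hMG : M ≤ G := Nat.le_self_pow (by omega) _
  have hNR : N ≤ R := by omega
  have hR1 : 1 ≤ R := by omega
  set q := M ^ d with hq
  -- the finite set of positions
  set S : Finset ℕ := (range (q + 1) ×ˢ range N).image (fun a => a.1 * R + a.2) with hS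
  have hScard : (S.card : ℝ) ≤ ((M : ℝ) ^ d + 1) * N := by
    have : S.card ≤ (q + 1) * N := Finset.card_image_le.trans (by simp)
    calc (S.card : ℝ) ≤ (((q + 1) * N : ℕ) : ℝ) := by exact_mod_cast this
      _ = _ := by rw [hq]; push_cast; ring
  have hSmem : ∀ h, h ∉ S → q < h / R ∨ N ≤ h % R := by
    intro h hh
    by_contra hcon
    push Not at hcon
    apply hh
    rw [hS, Finset.mem_image]
    refine ⟨(h / R, h % R), ?_, ?_⟩
    · simp; omega
    · simp only; rw [mul_comm]; exact Nat.div_add_mod _ _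
  have hdiv0 : ∀ h, ¬ (1 ≤ h / R) → h < R := by
    intro h hh
    by_contra hcon
    exact hh ((Nat.one_le_div_iff (by omega)).2 (not_lt.1 hcon))
  let b : Fin d → ℕ → ℂ := fun t => blk r R q (fun i => Lam i t) (v t) (x0 t)
  let x : Fin d → lpC p := fun t => mkv p ((q + 1) * R) (b t)
  have hxb : ∀ t h, x t h = b t h := by
    intro t h
    show mkv p ((q + 1) * R) (b t) h = b t h
    rw [mkv_apply]
    split_ifs with hh
    · rfl
    · have : q < h / R := by
        rw [Nat.lt_iff_add_one_le, Nat.le_div_iff_mul_le (by omega)]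
        omega
      exact (blk_zero hm hr (hv t) (by omega) (Or.inl this)).symm
  refine ⟨x, ?_, q * R + 1, ?_⟩
  · rw [pi_norm_lt_iff hε]
    intro t
    refine lt_of_le_of_lt (lp_fin _ S ?_) (lt_of_le_of_lt (Finset.sum_le_card_nsmul S _
      ((‖v‖ * N + 1) / (G : ℝ)) ?_) ?_)
    · intro h hh
      rw [Pi.sub_apply, lp.coeFn_sub, Pi.sub_apply, hxb]
      by_cases h1 : 1 ≤ h / R
      · have : b t h = 0 := blk_zero hm hr (hv t) h1 (hSmem h hh)
        rw [this, hx0 t h, sub_zero]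
        have : R ≤ h := (Nat.one_le_div_iff (by omega)).1 h1
        omega
      · have h2 : h / R = 0 := Nat.div_eq_of_lt (hdiv0 h h1)
        have : b t h = x0 t h := by simp only [b, blk]; rw [if_pos h2]
        rw [this, sub_self]
    · intro h _
      rw [Pi.sub_apply, lp.coeFn_sub, Pi.sub_apply, hxb]
      by_cases h1 : 1 ≤ h / R
      · have hR' : R ≤ h := (Nat.one_le_div_iff (by omega)).1 h1
        rw [hx0 t h (by omega), sub_zero]
        exact blk_bound hs hm hr (hal t) (fun i => (hLam i t).1) (hv t) (hVt t) hG1 h1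
      · have h2 : h / R = 0 := Nat.div_eq_of_lt (hdiv0 h h1)
        have : b t h = x0 t h := by simp only [b, blk]; rw [if_pos h2]
        rw [this, sub_self, norm_zero]
        positivity
    · rw [nsmul_eq_mul]
      refine lt_of_le_of_lt ?_ hA
      gcongr
  · intro f hf lam hlam z hz
    obtain ⟨j, hj1, hjq, hj⟩ := hgrid lam hlam
    have hjR : 1 ≤ j * R := Nat.one_le_iff_ne_zero.2 (by positivity)
    have hjqR : j * R ≤ q * R := Nat.mul_le_mul_right _ hjq
    refine ⟨j * R - 1, by omega, ?_⟩
    rw [Nat.sub_add_cancel hjR, pi_norm_lt_iff hε]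
    intro t
    have hlam0 : ∀ t, 0 < lam t := fun t =>
      lt_of_lt_of_le (by positivity) ((hal t).trans (hlam t).1)
    have hcoord : ∀ h, ((T lam ^ (j * R)) z - v) t h =
        (WW (lam t) h (j * R) : ℂ) * f (blk r R q (fun i => Lam i t) (v t) (x0 t) (h + j * R)) - v t h := by
      intro h
      rw [Pi.sub_apply, lp.coeFn_sub, Pi.sub_apply, T_pow (hT lam hlam0), hz, hxb]
    have hsub : range N ∪ S = range N ∪ (S \ range N) := by simp
    refine lt_of_le_of_lt (lp_fin _ (range N ∪ (S \ range N)) ?_) (lt_of_le_of_lt ?_ hB)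
    · intro h hh
      rw [← hsub, Finset.mem_union, not_or] at hh
      have hN' : N ≤ h := by simpa using hh.1
      rw [hcoord, hv t h hN', sub_zero]
      exact cross_zero hm hr (hv t) hf hR1 hj1 (hSmem h hh.2)
    · rw [Finset.sum_union Finset.disjoint_sdiff]
      apply add_le_add
      · refine (Finset.sum_le_card_nsmul _ _ _ ?_).trans_eq (by rw [nsmul_eq_mul, card_range])
        intro h hh
        have hhN : h < N := by simpa using hh
        rw [hcoord]
        exact diag_bound hs hm hr (hal t) (fun i => (hLam i t).1) (hv t) (hVt t) hG1 hf hsm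
          (hlam t).1 (hj t) (by omega) hj1 hjq htau
      · refine (Finset.sum_le_card_nsmul _ _ ((D + 1) * ‖v‖ * N * Real.exp (1 / (2 * s) *
          (1 + Real.log ((q : ℝ) * (R : ℝ)))) / (G : ℝ) ^ m) ?_).trans ?_
        · intro h hh
          rw [Finset.mem_sdiff] at hh
          have hhN : N ≤ h := by simpa using hh.2
          rw [hcoord, hv t h hhN, sub_zero]
          have h1 : 1 ≤ h / R := by
            by_contra hcon
            have hlt := hdiv0 h hcon
            obtain ⟨⟨a, k⟩, hak, rfl⟩ := Finset.mem_image.1 hh.1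
            simp at hak hlt hhN
            have : a = 0 := by
              by_contra h0
              have : R ≤ a * R := Nat.le_mul_of_pos_left _ (by omega)
              omega
            subst this
            omega
          exact cross_bound hs hm hr (hal t) (fun i => (hLam i t).1) (hv t) (hVt t) hG1 hf hsm
            (hlam t).1 (fun i => by
              have h3 := hLam i t
              have h4 := hlam t
              rw [abs_le]; constructor <;> linarith) h1 hj1
        · rw [nsmul_eq_mul]
          have : ((S \ range N).card : ℝ) ≤ ((M : ℝ) ^ d + 1) * N := by
            refine le_trans ?_ hScard
            exact_mod_cast Finset.card_le_card Finset.sdiff_subset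
          gcongr

end lpfacts

/-- The set of good vectors for one task. -/
def Good {p : ℝ≥0∞} [Fact (1 ≤ p)] {d : ℕ}
    (T : (Fin d → ℝ) → ((Fin d → lpC p) →L[ℂ] (Fin d → lpC p)))
    (s m D : ℕ) (alpha : Fin d → ℝ) (v : Fin d → lpC p) (ε : ℝ) : Set (Fin d → lpC p) :=
  {y | ∀ f, FC m D f → ∀ lam : Fin d → ℝ,
    (∀ t, alpha t ≤ lam t ∧ lam t ≤ alpha t + 1 / (2 * s)) → ∀ z : Fin d → lpC p,
      (∀ t h, z t h = f (y t h)) → ∃ n : ℕ, ‖((T lam) ^ (n + 1)) z - v‖ < ε}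

lemma good_dense {p : ℝ≥0∞} [Fact (1 ≤ p)] {d : ℕ} (hp : p ≠ ⊤)
    (T : (Fin d → ℝ) → ((Fin d → lpC p) →L[ℂ] (Fin d → lpC p)))
    (hT : ∀ lam : Fin d → ℝ, (∀ i, 0 < lam i) →
      IsProductShift p d (fun a n => 1 + a / (n : ℝ)) (T lam) lam)
    (s m D N : ℕ) (hs : 1 ≤ s) (hm : 1 ≤ m) (alpha : Fin d → ℝ)
    (hal : ∀ t, 1 / (s : ℝ) ≤ alpha t) (v : Fin d → lpC p)
    (hv : ∀ t k, N ≤ k → v t k = 0) (ε : ℝ) (hε : 0 < ε) :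
    Dense (interior (Good T s m D alpha v ε)) := by
  have hs1 : (1 : ℝ) ≤ s := by exact_mod_cast hs
  rw [Metric.dense_iff]
  intro y r hr
  obtain ⟨N', g', hx0⟩ := tgt_dense hp y (r / 2) (by positivity)
  obtain ⟨x, hxx, L, hL⟩ := core T hT s m D (max N N') hs hm alpha hal v (tgt p N' g')
    (fun t k hk => hv t k ((le_max_left _ _).trans hk))
    (fun t k hk => tgt_supp _ _ t k ((le_max_right _ _).trans hk)) (min (ε / 2) (r / 2))
    (by positivity)
  refine ⟨x, ?_, ?_⟩
  · rw [Metric.mem_ball, dist_eq_norm]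
    have h1 : x - y = (x - tgt p N' g') - (y - tgt p N' g') := by abel
    rw [h1]
    refine lt_of_le_of_lt (norm_sub_le _ _) ?_
    have := hxx.trans_le (min_le_right _ _)
    linarith
  · rw [mem_interior_iff_mem_nhds, Metric.mem_nhds_iff]
    set W := Real.exp ((‖alpha‖ + 1) * (L + 1)) with hW
    set C : ℝ := D * (1 + (‖x‖ + 1) + ‖x‖) ^ D with hC
    have hW0 : 0 < W := Real.exp_pos _
    have hC0 : 0 ≤ C := by positivity
    refine ⟨min 1 (ε / 2 / (W * C + 1)), by positivity, ?_⟩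
    intro y' hy' f hf lam hlam z' hz'
    rw [Metric.mem_ball, dist_eq_norm] at hy'
    have hy1 := hy'.trans_le (min_le_left _ _)
    have hy2 := hy'.trans_le (min_le_right _ _)
    have hlam0 : ∀ t, 0 < lam t := fun t =>
      lt_of_lt_of_le (by positivity) ((hal t).trans (hlam t).1)
    obtain ⟨z, hz⟩ := exists_img_pi hp f hf.1 D hf.2.1 x
    obtain ⟨n, hnL, hn⟩ := hL f hf lam hlam z hz
    refine ⟨n, ?_⟩
    have hn' := hn.trans_le (min_le_left _ _)
    have hdiff : ‖((T lam) ^ (n + 1)) z' - ((T lam) ^ (n + 1)) z‖ ≤ W * C * ‖y' - x‖ := by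
      rw [pi_norm_le_iff_of_nonneg (by positivity)]
      intro t
      have hfin : ‖(((T lam) ^ (n + 1)) z' - ((T lam) ^ (n + 1)) z) t‖ ≤ W * C * ‖(y' - x) t‖ := by
        apply lp_le_shift hp _ _ _ (by positivity) (n + 1)
        intro h
        rw [Pi.sub_apply, lp.coeFn_sub, Pi.sub_apply, T_pow (hT lam hlam0), T_pow (hT lam hlam0),
          hz, hz', ← mul_sub, norm_mul, Complex.norm_real,
          Real.norm_of_nonneg (WW_pos (hlam0 t).le _ _).le, Pi.sub_apply, lp.coeFn_sub, Pi.sub_apply]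
        have hw : WW (lam t) h (n + 1) ≤ W := by
          refine (WW_le_exp (hlam0 t).le _ _).trans (Real.exp_le_exp.2 ?_)
          have h1 : lam t ≤ ‖alpha‖ + 1 := by
            have h2 := (hlam t).2
            have h3 : alpha t ≤ ‖alpha‖ := (le_abs_self _).trans (norm_le_pi_norm alpha t)
            have h4 : 1 / (2 * (s : ℝ)) ≤ 1 := by
              rw [div_le_one (by positivity)]; linarith
            linarith
          have h5 : ((n + 1 : ℕ) : ℝ) ≤ (L : ℝ) + 1 := by
            have : n + 1 ≤ L + 1 := by omega
            exact_mod_cast this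
          gcongr
        have hx1 : ‖x t (h + (n + 1))‖ ≤ ‖x‖ :=
          (lp.norm_apply_le_norm p_pos.ne' (x t) _).trans (norm_le_pi_norm x t)
        have hy3 : ‖y' t (h + (n + 1))‖ ≤ ‖x‖ + 1 := by
          refine ((lp.norm_apply_le_norm p_pos.ne' (y' t) _).trans (norm_le_pi_norm y' t)).trans ?_
          have : ‖y'‖ ≤ ‖x‖ + ‖y' - x‖ := by
            have := norm_add_le x (y' - x)
            rwa [add_sub_cancel] at this
          linarith
        have hlip := hf.2.1 (y' t (h + (n + 1))) (x t (h + (n + 1)))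
        rw [mul_assoc]
        gcongr
        refine hlip.trans ?_
        rw [hC]
        gcongr
      refine hfin.trans ?_
      have := norm_le_pi_norm (y' - x) t
      gcongr
    have hsplit : ((T lam) ^ (n + 1)) z' - v = (((T lam) ^ (n + 1)) z' - ((T lam) ^ (n + 1)) z) +
        (((T lam) ^ (n + 1)) z - v) := by abel
    rw [hsplit]
    refine lt_of_le_of_lt (norm_add_le _ _) ?_
    have h6 : W * C * ‖y' - x‖ ≤ ε / 2 := by
      rw [lt_div_iff₀ (by positivity)] at hy2
      nlinarith [norm_nonneg (y' - x)]
    linarith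

lemma exists_box {d : ℕ} (lam : Fin d → ℝ) (hlam : ∀ t, 0 < lam t) :
    ∃ (s : ℕ) (c : Fin d → ℕ), ∀ t, ((c t + 2 : ℕ) : ℝ) / (2 * ((s + 1 : ℕ) : ℝ)) ≤ lam t ∧
      lam t ≤ ((c t + 2 : ℕ) : ℝ) / (2 * ((s + 1 : ℕ) : ℝ)) + 1 / (2 * ((s + 1 : ℕ) : ℝ)) := by
  have h1 : ∀ t, ∀ᶠ s : ℕ in Filter.atTop, 1 / ((s : ℝ) + 1) < lam t := fun t =>
    tendsto_one_div_add_atTop_nhds_zero_nat.eventually (gt_mem_nhds (hlam t))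
  obtain ⟨s, hs⟩ := (Filter.eventually_all.2 h1).exists
  refine ⟨s, fun t => ⌊2 * ((s + 1 : ℕ) : ℝ) * lam t⌋₊ - 2, fun t => ?_⟩
  have hS : (0 : ℝ) < ((s + 1 : ℕ) : ℝ) := by positivity
  have h2 := hs t
  have h3 : 2 ≤ ⌊2 * ((s + 1 : ℕ) : ℝ) * lam t⌋₊ := by
    apply Nat.le_floor
    rw [div_lt_iff₀ (by positivity)] at h2
    push_cast
    nlinarith
  have hnn : 0 ≤ 2 * ((s + 1 : ℕ) : ℝ) * lam t := by
    have := hlam t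
    positivity
  rw [Nat.sub_add_cancel h3]
  constructor
  · rw [div_le_iff₀ (by positivity)]
    have := Nat.floor_le hnn
    linarith
  · rw [← add_div, le_div_iff₀ (by positivity)]
    have := Nat.lt_floor_add_one (2 * ((s + 1 : ℕ) : ℝ) * lam t)
    linarith

lemma exists_generic {p : ℝ≥0∞} [Fact (1 ≤ p)] {d : ℕ} (hp : p ≠ ⊤)
    (T : (Fin d → ℝ) → ((Fin d → lpC p) →L[ℂ] (Fin d → lpC p)))
    (hT : ∀ lam : Fin d → ℝ, (∀ i, 0 < lam i) →
      IsProductShift p d (fun a n => 1 + a / (n : ℝ)) (T lam) lam) :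
    ∃ x : Fin d → lpC p, ∀ m D : ℕ, 1 ≤ m → ∀ f, FC m D f → ∀ lam : Fin d → ℝ, (∀ t, 0 < lam t) →
      ∀ z : Fin d → lpC p, (∀ t h, z t h = f (x t h)) → ∀ (v : Fin d → lpC p) (ε : ℝ), 0 < ε →
        ∃ n : ℕ, ‖((T lam) ^ (n + 1)) z - v‖ < ε := by
  let U : (ℕ × (Fin d → ℕ) × ℕ × ℕ × ℕ × (Fin d → ℕ →₀ ℕ) × ℕ) → Set (Fin d → lpC p) :=
    fun a => interior (Good T (a.1 + 1) (a.2.2.1 + 1) a.2.2.2.1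
      (fun t => ((a.2.1 t + 2 : ℕ) : ℝ) / (2 * ((a.1 + 1 : ℕ) : ℝ)))
      (tgt p a.2.2.2.2.1 a.2.2.2.2.2.1) (1 / ((a.2.2.2.2.2.2 : ℝ) + 1)))
  have hd : Dense (⋂ a, U a) := by
    apply dense_iInter_of_isOpen
    · intro a; exact isOpen_interior
    · rintro ⟨s, c, m, D, N, g, e⟩
      refine good_dense hp T hT (s + 1) (m + 1) D N (by omega) (by omega) _ ?_ _
        (fun t k hk => tgt_supp N g t k hk) _ (by positivity)
      intro t
      dsimp only
      rw [div_le_div_iff₀ (by positivity) (by positivity)]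
      push_cast
      have : (0 : ℝ) ≤ c t := by positivity
      have : (0 : ℝ) ≤ s := by positivity
      nlinarith
  obtain ⟨x, hx⟩ := hd.nonempty
  refine ⟨x, fun m D hm f hf lam hlam z hz v ε hε => ?_⟩
  obtain ⟨s, c, hsc⟩ := exists_box lam hlam
  obtain ⟨N, g, hg⟩ := tgt_dense hp v (ε / 2) (by positivity)
  obtain ⟨e, he⟩ := exists_nat_one_div_lt (half_pos hε)
  have h1 := interior_subset (Set.mem_iInter.1 hx (s, c, m - 1, D, N, g, e))
  obtain ⟨n, hn⟩ := h1 f (by simpa [Nat.sub_add_cancel hm] using hf) lam hsc z hz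
  refine ⟨n, ?_⟩
  have e1 : ((T lam) ^ (n + 1)) z - v = (((T lam) ^ (n + 1)) z - tgt p N g) - (v - tgt p N g) := by
    abel
  rw [e1]
  refine lt_of_le_of_lt (norm_sub_le _ _) ?_
  have := hn.trans he
  linarith

/-- Example 2.6 of the paper, case `X = ℓᵖ(ℕ)`, `w n (λ) = 1 + λ / n`. -/
theorem stmt_13 (d : ℕ) (hd : 1 ≤ d) (p : ℝ≥0∞) [Fact (1 ≤ p)] (hp : p ≠ ⊤)
    (T : (Fin d → ℝ) → ((Fin d → lpC p) →L[ℂ] (Fin d → lpC p)))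
    (hT : ∀ lam : Fin d → ℝ, (∀ i, 0 < lam i) →
      IsProductShift p d (fun a n => 1 + a / (n : ℝ)) (T lam) lam) :
    CommonHypercyclicAlgebraCW p d {lam | ∀ i, 0 < lam i} T := by
  obtain ⟨x, hx⟩ := exists_generic hp T hT
  refine ⟨{y | ∃ P : Polynomial ℂ, P.coeff 0 = 0 ∧ ∀ t h, y t h = P.eval (x t h)},
    ?_, ?_, ?_, ?_, ?_, ?_⟩
  · exact ⟨0, by simp, fun t h => by simp⟩
  · rintro y ⟨P, hP, hy⟩ y' ⟨Q, hQ, hy'⟩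
    refine ⟨P + Q, by simp [hP, hQ], fun t h => ?_⟩
    rw [Pi.add_apply, lp.coeFn_add, Pi.add_apply, hy, hy', Polynomial.eval_add]
  · rintro c y ⟨P, hP, hy⟩
    refine ⟨Polynomial.C c * P, by simp [hP], fun t h => ?_⟩
    rw [Pi.smul_apply, lp.coeFn_smul, Pi.smul_apply, hy, Polynomial.eval_mul, Polynomial.eval_C,
      smul_eq_mul]
  · rintro y ⟨P, hP, hy⟩ y' ⟨Q, hQ, hy'⟩
    obtain ⟨D, hD⟩ := poly_lip (P * Q)
    have h0 : (P * Q).coeff 0 = 0 := by simp [Polynomial.mul_coeff_zero, hP]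
    obtain ⟨z, hz⟩ := exists_img_pi hp (fun u => (P * Q).eval u)
      (by rw [← Polynomial.coeff_zero_eq_eval_zero, h0]) D hD x
    refine ⟨z, ⟨P * Q, h0, hz⟩, fun t h => ?_⟩
    rw [hz, hy, hy', Polynomial.eval_mul]
  · refine ⟨x, ⟨Polynomial.X, by simp, fun t h => by simp⟩, ?_⟩
    rintro rfl
    have hFC : FC 1 1 (fun u => u) := by
      refine ⟨rfl, fun u w => ?_, fun u hu => ?_⟩
      · have := norm_nonneg u
        have := norm_nonneg w
        have := norm_nonneg (u - w)
        simp only [Nat.cast_one, pow_one, one_mul]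
        nlinarith
      · simp
    let v : Fin d → lpC p := fun _ => lp.single p 0 (1 : ℂ)
    obtain ⟨n, hn⟩ := hx 1 1 le_rfl _ hFC (fun _ => 1) (fun _ => one_pos) 0 (fun t h => rfl) v 1
      one_pos
    rw [map_zero, zero_sub, norm_neg, pi_norm_lt_iff one_pos] at hn
    have h1 := hn ⟨0, hd⟩
    have h2 : ‖v ⟨0, hd⟩‖ = 1 := by
      have := lp.norm_single (E := fun _ : ℕ => ℂ) (p_pos (p := p)) 0 (1 : ℂ)
      rw [norm_one] at this
      exact this
    linarith
  · rintro y ⟨P, hP, hy⟩ hy0 lam hlam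
    have hP0 : P ≠ 0 := by
      rintro rfl
      apply hy0
      funext t
      ext h
      rw [hy]
      simp
    obtain ⟨m, D, c, hc, hm, hFC⟩ := poly_FC P hP0 hP
    rw [Metric.dense_iff]
    intro w r hr
    have hcn : 0 < ‖c‖ := norm_pos_iff.2 hc
    obtain ⟨n, hn⟩ := hx m D hm _ hFC lam hlam (c⁻¹ • y) (fun t h => by
      rw [Pi.smul_apply, lp.coeFn_smul, Pi.smul_apply, hy, smul_eq_mul]) (c⁻¹ • w) (r / ‖c‖)
      (by positivity)
    refine ⟨((T lam) ^ (n + 1)) y, ?_, ⟨n, rfl⟩⟩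
    rw [map_smul, ← smul_sub, norm_smul, norm_inv, lt_div_iff₀ hcn] at hn
    rw [Metric.mem_ball, dist_eq_norm]
    calc _ = ‖c‖⁻¹ * ‖((T lam) ^ (n + 1)) y - w‖ * ‖c‖ := by field_simp
      _ < r := hn
end
end

section
/- Let d ≥ 1 be an integer, and for λ > 0 let w(λ) be the weight sequence w_n(λ) = (1 + 1/n)^λ for n ≥ 1. Then the family (B_{w(λ₁)} × ⋯ × B_{w(λ_d)})_{λ∈(0,∞)^d} admits a common hypercyclic algebra on c₀(ℕ)^d for the coordinatewise product. -/
open scoped ENNReal ZeroAtInfty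
open Finset

noncomputable section

/-- The space `c₀(ℕ)` of complex sequences vanishing at infinity, with the sup norm. -/
abbrev c0C : Type := C₀(ℕ, ℂ)

/-- `T` is the product operator `B_{w(lam 0)} × ⋯ × B_{w(lam (d-1))}` of weighted backward
shifts, the weight sequence of the `i`-th factor being `(w (lam i) n)_{n ≥ 1}`. -/
def IsProductShiftC0 (d : ℕ) (w : ℝ → ℕ → ℝ)
    (T : (Fin d → c0C) →L[ℂ] (Fin d → c0C)) (lam : Fin d → ℝ) : Prop :=
  ∀ (v : Fin d → c0C) (i : Fin d) (n : ℕ),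
    (T v) i n = (w (lam i) (n + 1) : ℂ) * v i (n + 1)

/-- The family `T lam`, `lam ∈ S`, admits a common hypercyclic algebra for the coordinatewise
product: there is a non-unital subalgebra `A ≠ {0}` of `(c₀(ℕ))^d` (closed under addition,
scalar multiplication and the componentwise coordinatewise product) every nonzero element of
which is a common hypercyclic vector for the family. -/
def CommonHypercyclicAlgebraCWC0 (d : ℕ) (S : Set (Fin d → ℝ))
    (T : (Fin d → ℝ) → ((Fin d → c0C) →L[ℂ] (Fin d → c0C))) : Prop :=
  ∃ A : Set (Fin d → c0C),
    (0 : Fin d → c0C) ∈ A ∧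
    (∀ x ∈ A, ∀ y ∈ A, x + y ∈ A) ∧
    (∀ (c : ℂ), ∀ x ∈ A, c • x ∈ A) ∧
    (∀ x ∈ A, ∀ y ∈ A, ∃ z ∈ A, ∀ (i : Fin d) (n : ℕ), z i n = x i n * y i n) ∧
    (∃ x ∈ A, x ≠ 0) ∧
    (∀ x ∈ A, x ≠ 0 → ∀ lam ∈ S, Dense (Set.range fun n : ℕ => ((T lam) ^ (n + 1)) x))


open Filter Topology in
lemma choose_q (d R : ℕ) (hd : 1 ≤ d) (hR : 1 ≤ R) (L : ℕ) (V ε ε' D : ℝ) (hV : 0 ≤ V)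
    (hε : 0 < ε) (hε' : 0 < ε') :
    ∃ q : ℕ, 2 ≤ q ∧ L ≤ q ^ (d * R ^ 2) ∧
      V * (((2 : ℝ) * ((q : ℝ) ^ d * (q : ℝ) ^ (d * R ^ 2))) ^ ((R : ℝ) / q) - 1) ≤ ε ∧
      D * ((2 * (q : ℝ) ^ d) ^ R * ((q : ℝ) ^ d * (q : ℝ) ^ (d * R ^ 2)) ^ (-(1 / (R : ℝ)))) ≤ ε' := by
  have hR0 : (0 : ℝ) < R := by exact_mod_cast hR
  have hd0 : (0 : ℝ) < d := by exact_mod_cast hd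
  have e1 : ∀ᶠ q : ℕ in atTop, 2 ≤ q := eventually_ge_atTop 2
  have e2 : ∀ᶠ q : ℕ in atTop, L ≤ q := eventually_ge_atTop L
  have e3 : ∀ᶠ q : ℕ in atTop,
      V * (((q : ℝ) ^ ((R : ℝ) / q)) ^ (d + d * R ^ 2 + 1) - 1) < ε := by
    have h := (tendsto_rpow_div_mul_add (R : ℝ) 1 0 (by norm_num)).comp
      (tendsto_natCast_atTop_atTop (R := ℝ))
    have h2 := (((h.pow (d + d * R ^ 2 + 1)).sub_const 1).const_mul V)
    simp only [one_pow, sub_self, mul_zero] at h2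
    have h3 := h2.eventually (gt_mem_nhds hε)
    filter_upwards [h3] with q hq
    simpa using hq
  have e4 : ∀ᶠ q : ℕ in atTop, D * (2 ^ R * (q : ℝ) ^ (-((d : ℝ) / R))) < ε' := by
    have h := (tendsto_rpow_neg_atTop (y := (d : ℝ) / R) (by positivity)).comp
      (tendsto_natCast_atTop_atTop (R := ℝ))
    have h2 := (h.const_mul ((2 : ℝ) ^ R)).const_mul D
    simp only [mul_zero] at h2
    exact h2.eventually (gt_mem_nhds hε')
  obtain ⟨q, h1, h2, h3, h4⟩ := (e1.and (e2.and (e3.and e4))).exists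
  have hq : (2 : ℝ) ≤ q := by exact_mod_cast h1
  have hq0 : (0 : ℝ) < q := by linarith
  refine ⟨q, h1, ?_, ?_, ?_⟩
  · refine h2.trans (Nat.le_self_pow ?_ q)
    have : 0 < d * R ^ 2 := by positivity
    omega
  · refine le_trans ?_ h3.le
    gcongr
    rw [← Real.rpow_natCast ((q : ℝ) ^ ((R : ℝ) / q)), ← Real.rpow_mul hq0.le, mul_comm ((R : ℝ) / q),
      Real.rpow_mul hq0.le, Real.rpow_natCast]
    gcongr
    rw [pow_add (q : ℝ) (d + d * R ^ 2) 1, pow_add (q : ℝ) d, pow_one]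
    nlinarith [show (0 : ℝ) < (q : ℝ) ^ d * (q : ℝ) ^ (d * R ^ 2) by positivity]
  · refine le_trans (le_of_eq ?_) h4.le
    congr 1
    rw [mul_pow, mul_assoc]
    congr 1
    rw [← pow_add, ← pow_mul, ← Real.rpow_natCast, ← Real.rpow_natCast, ← Real.rpow_mul hq0.le,
      ← Real.rpow_add hq0]
    congr 1
    push_cast
    field_simp
    ring

lemma exists_cells (d q : ℕ) (hq : 2 ≤ q) : ∃ c : ℕ → Fin d → ℕ, (∀ k i, c k i < q) ∧
    ∀ f : Fin d → ℕ, (∀ i, f i < q) → ∃ j < q ^ d, c j = f := by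
  refine ⟨fun k => if h : k < q ^ d then fun i => (finFunctionFinEquiv.symm ⟨k, h⟩ i : Fin q)
    else fun _ => 0, ?_, ?_⟩
  · intro k i
    by_cases h : k < q ^ d
    · simp only [h, dif_pos]; exact Fin.is_lt _
    · simp only [h, dif_neg, not_false_eq_true]; omega
  · intro f hf
    let g : Fin d → Fin q := fun i => ⟨f i, hf i⟩
    refine ⟨finFunctionFinEquiv g, Fin.is_lt _, ?_⟩
    funext i
    beta_reduce
    rw [dif_pos (Fin.is_lt _)]
    simp only [Fin.eta, Equiv.symm_apply_apply, g]

lemma stage (d R : ℕ) (hd : 1 ≤ d) (hR : 1 ≤ R) (m : ℕ) (hm : 1 ≤ m) (L : ℕ)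
    (v : Fin d → ℕ → ℂ) (V : ℝ) (hvV : ∀ i n, ‖v i n‖ ≤ V) (hvL : ∀ i n, L ≤ n → v i n = 0)
    (ε : ℝ) (hε : 0 < ε) (N0 : ℕ) :
    ∃ (b : Fin d → ℕ → ℂ) (M : ℕ), N0 ≤ M ∧ (∀ i n, n < N0 → b i n = 0) ∧
      (∀ i n, M ≤ n → b i n = 0) ∧ (∀ i n, ‖b i n‖ ≤ ε) ∧
      ∀ lam : Fin d → ℝ, (∀ i, 1 / (R : ℝ) ≤ lam i ∧ lam i ≤ R) →
        ∃ N : ℕ, 1 ≤ N ∧ N0 ≤ N ∧ N ≤ M ∧ ∀ (i : Fin d) (n : ℕ),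
          ‖((((N + n + 1 : ℝ) / (n + 1)) ^ lam i : ℝ) : ℂ) * b i (N + n) ^ m - v i n‖ ≤ ε := by
  have hR1 : (1 : ℝ) ≤ R := by exact_mod_cast hR
  have hR0 : (0 : ℝ) < R := by linarith
  have hV : 0 ≤ V := (norm_nonneg _).trans (hvV ⟨0, hd⟩ 0)
  set D : ℝ := V * ((L : ℝ) + 1) ^ (2 * (R : ℝ)) with hD
  have hD0 : 0 ≤ D := by positivity
  obtain ⟨q, hq2, hqL, hq3, hq4⟩ := choose_q d R hd hR (L + N0 + 1) V ε (min ε (ε ^ m)) D hV hε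
    (by positivity)
  obtain ⟨c, hcq, hcs⟩ := exists_cells d q hq2
  have hqr : (2 : ℝ) ≤ q := by exact_mod_cast hq2
  have hq0 : (0 : ℝ) < q := by linarith
  set Q : ℕ := q ^ d with hQ
  set G : ℕ := q ^ (d * R ^ 2) with hG
  have hQc : (q : ℝ) ^ d = (Q : ℝ) := by simp [hQ]
  have hGc : (q : ℝ) ^ (d * R ^ 2) = (G : ℝ) := by simp [hG]
  rw [hQc, hGc] at hq3 hq4
  have hQ1 : 1 ≤ Q := Nat.one_le_pow _ _ (by omega)
  have hG1 : 1 ≤ G := by omega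
  have hQr : (1 : ℝ) ≤ Q := by exact_mod_cast hQ1
  have hGr : (1 : ℝ) ≤ G := by exact_mod_cast hG1
  have hKr : (1 : ℝ) ≤ Q * G := by nlinarith
  have hGK : G ≤ Q * G := Nat.le_mul_of_pos_left _ hQ1
  set mu : ℕ → Fin d → ℝ := fun k i => 1 / (R : ℝ) + c k i * ((R : ℝ) / q) with hmu
  have hmu1 : ∀ k i, 1 / (R : ℝ) ≤ mu k i := by
    intro k i
    have : (0 : ℝ) ≤ c k i * ((R : ℝ) / q) := by positivity
    simp only [hmu]; linarith
  have hmu0 : ∀ k i, 0 < mu k i := fun k i => lt_of_lt_of_le (by positivity) (hmu1 k i)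
  have hmu2 : ∀ k i, mu k i ≤ 2 * R := by
    intro k i
    have h1 : (c k i : ℝ) ≤ q := by exact_mod_cast (hcq k i).le
    have h2 : (c k i : ℝ) * ((R : ℝ) / q) ≤ q * ((R : ℝ) / q) := by gcongr
    have h3 : (q : ℝ) * ((R : ℝ) / q) = R := by field_simp
    have h4 : 1 / (R : ℝ) ≤ 1 := by rw [div_le_one hR0]; exact hR1
    simp only [hmu]; linarith
  have hm0 : (m : ℝ) ≠ 0 := by positivity
  set b : Fin d → ℕ → ℂ := fun i n => if Q ≤ n / G ∧ n / G < 2 * Q then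
    (v i (n % G)) ^ ((m : ℂ)⁻¹) *
      (((((n % G : ℕ) + 1 : ℝ) / (n + 1)) ^ (mu (n / G - Q) i / m) : ℝ) : ℂ) else 0 with hb
  have hbm : ∀ i n, Q ≤ n / G → n / G < 2 * Q → b i n ^ m =
      v i (n % G) * (((((n % G : ℕ) + 1 : ℝ) / (n + 1)) ^ (mu (n / G - Q) i) : ℝ) : ℂ) := by
    intro i n h1 h2
    simp only [hb, h1, h2, and_self, if_true]
    rw [mul_pow, Complex.cpow_nat_inv_pow _ (by omega)]
    congr 1
    rw [← Complex.ofReal_pow, ← Real.rpow_natCast, ← Real.rpow_mul (by positivity)]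
    congr 3
    field_simp
  have hb0 : ∀ i n, ¬ (Q ≤ n / G ∧ n / G < 2 * Q) → b i n = 0 := by
    intro i n h
    simp only [hb, h, if_false]
  set κ : ℝ := ((Q : ℝ) * G) ^ (-(1 / (R : ℝ))) with hκ
  have hκ0 : 0 ≤ κ := by positivity
  have hsm : ∀ i n, ‖b i n ^ m‖ ≤ D * κ := by
    intro i n
    by_cases h : Q ≤ n / G ∧ n / G < 2 * Q
    · rw [hbm i n h.1 h.2]
      by_cases hl : L ≤ n % G
      · rw [hvL i _ hl]; simp; positivity
      · push Not at hl
        rw [norm_mul, Complex.norm_real, Real.norm_eq_abs, abs_of_nonneg (by positivity)]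
        have hn : (Q : ℝ) * G ≤ n + 1 := by
          have : Q * G ≤ n := (Nat.le_div_iff_mul_le hG1).1 h.1
          have : ((Q * G : ℕ) : ℝ) ≤ n := by exact_mod_cast this
          push_cast at this; linarith
        rw [hD, mul_assoc]
        gcongr
        · exact hvV _ _
        rw [div_eq_mul_inv, Real.mul_rpow (by positivity) (by positivity),
          Real.inv_rpow (by positivity), ← Real.rpow_neg (by positivity)]
        gcongr
        · have hl' : ((n % G : ℕ) : ℝ) ≤ L := by exact_mod_cast hl.le
          calc ((n % G : ℕ) + 1 : ℝ) ^ mu (n / G - Q) i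
              ≤ ((L : ℝ) + 1) ^ mu (n / G - Q) i :=
                Real.rpow_le_rpow (by positivity) (by linarith) (hmu0 _ _).le
            _ ≤ _ := Real.rpow_le_rpow_of_exponent_le
                  (by linarith [Nat.cast_nonneg (α := ℝ) L]) (hmu2 _ _)
        · calc (n + 1 : ℝ) ^ (-mu (n / G - Q) i) ≤ ((Q : ℝ) * G) ^ (-mu (n / G - Q) i) :=
                Real.rpow_le_rpow_of_nonpos (by linarith) hn (by linarith [hmu0 (n / G - Q) i])
            _ ≤ κ := Real.rpow_le_rpow_of_exponent_le hKr (by linarith [hmu1 (n / G - Q) i])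
    · rw [hb0 i n h, zero_pow (by omega)]; simp; positivity
  have h2Q : (1 : ℝ) ≤ (2 * (Q : ℝ)) ^ R := one_le_pow₀ (by linarith)
  have hDκ : D * κ ≤ D * ((2 * (Q : ℝ)) ^ R * κ) := by
    have : κ ≤ (2 * (Q : ℝ)) ^ R * κ := le_mul_of_one_le_left hκ0 h2Q
    gcongr
  refine ⟨b, 2 * Q * G, ?_, ?_, ?_, ?_, ?_⟩
  · nlinarith
  · intro i n hn
    apply hb0
    have : n / G = 0 := Nat.div_eq_of_lt (by omega)
    omega
  · intro i n hn
    apply hb0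
    have : 2 * Q ≤ n / G := (Nat.le_div_iff_mul_le hG1).2 hn
    omega
  · intro i n
    have h := ((hsm i n).trans hDκ).trans (hq4.trans (min_le_right _ _))
    rw [norm_pow] at h
    exact le_of_pow_le_pow_left₀ (by omega) hε.le h
  · intro lam hlam
    have hfl : ∀ i, ⌊(lam i - 1 / R) * (q / R)⌋₊ < q := by
      intro i
      have h1 : 0 ≤ lam i - 1 / R := by linarith [(hlam i).1]
      rw [Nat.floor_lt (by positivity)]
      have h2 : lam i - 1 / R < R := by
        have : 0 < 1 / (R : ℝ) := by positivity
        linarith [(hlam i).2]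
      calc (lam i - 1 / R) * (q / R) < R * (q / R) := by gcongr
        _ = q := by field_simp
    obtain ⟨j, hj, hcj⟩ := hcs (fun i => ⌊(lam i - 1 / R) * (q / R)⌋₊) hfl
    have hl1 : ∀ i, mu j i ≤ lam i := by
      intro i
      have h1 : 0 ≤ lam i - 1 / R := by linarith [(hlam i).1]
      have h := Nat.floor_le (a := (lam i - 1 / R) * (q / R)) (by positivity)
      simp only [hmu, hcj]
      have h2 : (⌊(lam i - 1 / R) * (q / R)⌋₊ : ℝ) * (R / q) ≤
        (lam i - 1 / R) * (q / R) * (R / q) := by gcongr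
      have h3 : (lam i - 1 / R) * (q / R) * (R / q) = lam i - 1 / R := by field_simp
      linarith
    have hl2 : ∀ i, lam i - mu j i ≤ R / q := by
      intro i
      have h := Nat.lt_floor_add_one (a := (lam i - 1 / R) * (q / R))
      simp only [hmu, hcj]
      have h2 : (lam i - 1 / R) * (q / R) * (R / q) ≤
        ((⌊(lam i - 1 / R) * (q / R)⌋₊ : ℝ) + 1) * (R / q) := by gcongr
      have h3 : (lam i - 1 / R) * (q / R) * (R / q) = lam i - 1 / R := by field_simp
      linarith
    have hN1 : G ≤ (Q + j) * G := Nat.le_mul_of_pos_left _ (by omega)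
    refine ⟨(Q + j) * G, by omega, by omega, by gcongr; omega, ?_⟩
    intro i n
    have hmod : ((Q + j) * G + n) % G = n % G := by
      rw [Nat.add_comm, Nat.add_mul_mod_self_right]
    have hdiv : ((Q + j) * G + n) / G = Q + j + n / G := by
      rw [Nat.add_comm, Nat.add_mul_div_right _ _ hG1, Nat.add_comm]
    have hup : (Q + j + n / G) < 2 * Q → (((Q + j) * G : ℕ) : ℝ) + n + 1 ≤ 2 * (Q * G) := by
      intro h
      have h1 : (Q + j) * G + n < 2 * Q * G := by
        rw [← Nat.div_lt_iff_lt_mul hG1, hdiv]; exact h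
      have h2 : (((Q + j) * G + n + 1 : ℕ) : ℝ) ≤ (2 * Q * G : ℕ) := by exact_mod_cast h1
      push_cast at h2 ⊢; linarith
    by_cases hn : n < G
    · have hnG : n / G = 0 := Nat.div_eq_of_lt hn
      rw [hbm i _ (by rw [hdiv]; omega) (by rw [hdiv]; omega), hmod, hdiv, hnG,
        Nat.mod_eq_of_lt hn, show Q + j + 0 - Q = j by omega]
      set X : ℝ := (((Q + j) * G : ℕ) : ℝ) + n + 1 with hX
      have hXp : 0 < X := by positivity
      have hX2 : X ≤ 2 * (Q * G) := hup (by omega)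
      have hXn : (1 : ℝ) ≤ X / (n + 1) := by
        rw [one_le_div (by positivity), hX]
        have : (0 : ℝ) ≤ (((Q + j) * G : ℕ) : ℝ) := by positivity
        linarith
      have hXle : X / (n + 1) ≤ 2 * (Q * G) := by
        refine le_trans (div_le_self hXp.le ?_) hX2
        linarith [Nat.cast_nonneg (α := ℝ) n]
      have e : ((n : ℝ) + 1) / (((((Q + j) * G + n : ℕ)) : ℝ) + 1) = (X / (n + 1))⁻¹ := by
        rw [inv_div, hX]; push_cast; rfl
      rw [e]
      have e2 : (((X / (n + 1)) ^ lam i : ℝ) : ℂ) * (v i n * ((((X / (n + 1))⁻¹) ^ mu j i : ℝ) : ℂ))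
          - v i n = v i n * (((X / (n + 1)) ^ (lam i - mu j i) - 1 : ℝ) : ℂ) := by
        rw [Real.rpow_sub (by positivity), Real.inv_rpow (by positivity)]
        push_cast
        ring
      rw [e2, norm_mul, Complex.norm_real, Real.norm_eq_abs]
      have h1 : 1 ≤ (X / (n + 1)) ^ (lam i - mu j i) :=
        Real.one_le_rpow hXn (by linarith [hl1 i])
      rw [abs_of_nonneg (by linarith)]
      refine le_trans ?_ hq3
      have h2 : (X / (n + 1)) ^ (lam i - mu j i) ≤ (2 * ((Q : ℝ) * G)) ^ ((R : ℝ) / q) :=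
        calc _ ≤ (X / (n + 1)) ^ ((R : ℝ) / q) :=
              Real.rpow_le_rpow_of_exponent_le hXn (hl2 i)
          _ ≤ _ := Real.rpow_le_rpow (by positivity) hXle (by positivity)
      have := hvV i n
      have h0 : 0 ≤ (X / (n + 1)) ^ (lam i - mu j i) - 1 := by linarith
      gcongr
    · push Not at hn
      rw [hvL i n (by omega), sub_zero]
      by_cases hk : Q + j + n / G < 2 * Q
      · rw [norm_mul, Complex.norm_real, Real.norm_eq_abs, abs_of_nonneg (by positivity)]
        have hX2 := hup hk
        set X : ℝ := (((Q + j) * G : ℕ) : ℝ) + n + 1 with hX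
        have hXp : 0 < X := by positivity
        have hnr : (G : ℝ) ≤ n := by exact_mod_cast hn
        have hq1 : X / (n + 1) ≤ 2 * Q := by
          rw [div_le_iff₀ (by positivity)]
          nlinarith
        have h3 : (X / (n + 1)) ^ lam i ≤ (2 * (Q : ℝ)) ^ R := by
          have hl0 : 0 ≤ lam i := le_trans (by positivity) (hlam i).1
          rw [← Real.rpow_natCast]
          calc _ ≤ (2 * (Q : ℝ)) ^ lam i := Real.rpow_le_rpow (by positivity) hq1 hl0
            _ ≤ _ := Real.rpow_le_rpow_of_exponent_le (by linarith) (hlam i).2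
        calc _ ≤ (2 * (Q : ℝ)) ^ R * (D * κ) := by
              gcongr
              exact hsm _ _
          _ = D * ((2 * (Q : ℝ)) ^ R * κ) := by ring
          _ ≤ ε := hq4.trans (min_le_left _ _)
      · rw [hb0 i _ (by rw [hdiv]; omega), zero_pow (by omega)]
        simpa using hε.le

lemma exists_tasks (d : ℕ) : ∃ (m L : ℕ → ℕ) (v : ℕ → Fin d → ℕ → ℂ), (∀ s, 1 ≤ m s) ∧
    (∀ s i n, L s ≤ n → v s i n = 0) ∧
    ∀ k : ℕ, 1 ≤ k → ∀ w : Fin d → c0C, ∀ ε : ℝ, 0 < ε → ∀ S0 : ℕ,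
      ∃ s, S0 ≤ s ∧ m s = k ∧ ∀ i n, ‖v s i n - w i n‖ ≤ ε := by
  have : Nonempty (ℕ × Σ L : ℕ, Fin d → Fin L → ℕ) := ⟨(0, ⟨0, fun _ _ => 0⟩)⟩
  obtain ⟨f, hf⟩ := exists_surjective_nat (ℕ × Σ L : ℕ, Fin d → Fin L → ℕ)
  let val : (Σ L : ℕ, Fin d → Fin L → ℕ) → Fin d → ℕ → ℂ := fun t i n =>
    if h : n < t.1 then TopologicalSpace.denseSeq ℂ (t.2 i ⟨n, h⟩) else 0
  refine ⟨fun s => (f s.unpair.1).1 + 1, fun s => (f s.unpair.1).2.1,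
    fun s => val (f s.unpair.1).2, ?_, ?_, ?_⟩
  · intro s; simp
  · intro s i n h
    exact dif_neg (not_lt.2 h)
  · intro k hk w ε hε S0
    have h1 : ∀ i, ∃ L : ℕ, ∀ n ≥ L, ‖w i n‖ ≤ ε := by
      intro i
      have h := zero_at_infty (w i)
      rw [Filter.cocompact_eq_cofinite, Nat.cofinite_eq_atTop, Metric.tendsto_atTop] at h
      obtain ⟨L, hL⟩ := h ε hε
      exact ⟨L, fun n hn => by simpa using (hL n hn).le⟩
    choose L hL using h1
    set L' := Finset.univ.sup L
    have h2 : ∀ (i : Fin d) (n : Fin L'), ∃ a : ℕ, ‖TopologicalSpace.denseSeq ℂ a - w i n‖ ≤ ε := by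
      intro i n
      obtain ⟨a, ha⟩ := (TopologicalSpace.denseRange_denseSeq ℂ).exists_dist_lt (w i n) hε
      refine ⟨a, ?_⟩
      rw [← dist_eq_norm, dist_comm]; exact ha.le
    choose g hg using h2
    obtain ⟨t, ht⟩ := hf (k - 1, ⟨L', g⟩)
    refine ⟨Nat.pair t S0, Nat.right_le_pair _ _, ?_, ?_⟩
    · simp only [Nat.unpair_pair, ht]; omega
    · intro i n
      simp only [Nat.unpair_pair, ht]
      simp only [val]
      by_cases h : n < L'
      · rw [dif_pos h]; exact hg i ⟨n, h⟩
      · rw [dif_neg h, zero_sub, norm_neg]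
        apply hL
        have : L i ≤ L' := Finset.le_sup (Finset.mem_univ i)
        omega

lemma exists_u (d : ℕ) (hd : 1 ≤ d) (m L : ℕ → ℕ) (v : ℕ → Fin d → ℕ → ℂ) (hm : ∀ s, 1 ≤ m s)
    (hv : ∀ s i n, L s ≤ n → v s i n = 0) :
    ∃ u : Fin d → c0C, (∀ i n, ‖u i n‖ ≤ 1) ∧ ∀ (s : ℕ) (lam : Fin d → ℝ),
      (∀ i, 1 / ((s : ℝ) + 1) ≤ lam i ∧ lam i ≤ (s : ℝ) + 1) → ∃ N : ℕ, 1 ≤ N ∧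
      ∀ (i : Fin d) (n : ℕ),
        ‖((((N + n + 1 : ℝ) / (n + 1)) ^ lam i : ℝ) : ℂ) * u i (N + n) ^ (m s) - v s i n‖
          ≤ (1 + 2 ^ lam i) * (1 / ((s : ℝ) + 1)) ∧
        ((N + n + 1 : ℝ) / (n + 1)) ^ lam i * ‖u i (N + n)‖ ^ (m s + 1)
          ≤ (1 + 2 ^ lam i) * (1 / ((s : ℝ) + 1)) := by
  have hbd : ∀ s, ∃ V : ℝ, 0 ≤ V ∧ ∀ i n, ‖v s i n‖ ≤ V := by
    intro s
    refine ⟨∑ i : Fin d, ∑ n ∈ range (L s), ‖v s i n‖, by positivity, ?_⟩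
    intro i n
    by_cases h : n < L s
    · calc ‖v s i n‖ ≤ ∑ n ∈ range (L s), ‖v s i n‖ :=
            Finset.single_le_sum (f := fun n => ‖v s i n‖) (fun _ _ => norm_nonneg _)
              (Finset.mem_range.2 h)
        _ ≤ _ := Finset.single_le_sum (f := fun i => ∑ n ∈ range (L s), ‖v s i n‖)
              (fun _ _ => by positivity) (Finset.mem_univ i)
    · rw [hv s i n (by omega)]; simp only [norm_zero]; positivity
  choose V hV0 hV using hbd
  have hρ0 : ∀ s : ℕ, 0 < 1 / ((s : ℝ) + 1) := fun s => by positivity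
  have hst : ∀ (s N0 : ℕ), _ := fun s N0 => stage d (s + 1) hd (by omega) (m s) (hm s) (L s) (v s)
    (V s) (hV s) (hv s) (1 / ((s : ℝ) + 1) / (V s + 1)) (by have := hV0 s; positivity) N0
  choose B M hM hB0 hBM hBε hBN using hst
  let A : ℕ → ℕ := fun s => Nat.rec 0 (fun s a => 2 * M s a + 1) s
  have hA0 : A 0 = 0 := rfl
  have hA1 : ∀ s, A (s + 1) = 2 * M s (A s) + 1 := fun s => rfl
  have hAlt : ∀ s, A s < A (s + 1) := by
    intro s; rw [hA1]; have := hM s (A s); omega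
  have hAm : StrictMono A := strictMono_nat_of_lt_succ hAlt
  set U : Fin d → ℕ → ℂ := fun i n => ∑ s ∈ range (n + 1), B s (A s) i n with hU
  have hUeq : ∀ s i n, A s ≤ n → n < A (s + 1) → U i n = B s (A s) i n := by
    intro s i n h1 h2
    refine Finset.sum_eq_single s ?_ ?_
    · intro t _ hts
      rcases lt_or_gt_of_ne hts with h | h
      · apply hBM
        have : A (t + 1) ≤ A s := hAm.monotone h
        rw [hA1] at this; omega
      · apply hB0
        have : A (s + 1) ≤ A t := hAm.monotone h
        omega
    · intro h
      have := hAm.le_apply (x := s)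
      simp at h; omega
  have hex : ∀ n, ∃ s, A s ≤ n ∧ n < A (s + 1) := by
    intro n
    have h : ∃ s, n < A (s + 1) := ⟨n, lt_of_lt_of_le (Nat.lt_succ_self n) hAm.le_apply⟩
    refine ⟨Nat.find h, ?_, Nat.find_spec h⟩
    by_cases h0 : Nat.find h = 0
    · rw [h0, hA0]; omega
    · obtain ⟨k, hk⟩ := Nat.exists_eq_succ_of_ne_zero h0
      have := Nat.find_min h (m := k) (by omega)
      rw [hk]; simp at this ⊢; omega
  have hερ : ∀ s : ℕ, 1 / ((s : ℝ) + 1) / (V s + 1) ≤ 1 / ((s : ℝ) + 1) := by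
    intro s
    exact div_le_self (hρ0 s).le (by linarith [hV0 s])
  have hUs : ∀ s i n, A s ≤ n → ‖U i n‖ ≤ 1 / ((s : ℝ) + 1) := by
    intro s i n h
    obtain ⟨t, h1, h2⟩ := hex n
    rw [hUeq t i n h1 h2]
    refine ((hBε _ _ _ _).trans (hερ t)).trans ?_
    have hst : s ≤ t := by
      by_contra hc
      have hts : t + 1 ≤ s := by omega
      have : A (t + 1) ≤ A s := hAm.monotone hts
      omega
    have : (s : ℝ) ≤ t := by exact_mod_cast hst
    gcongr
  have hUt : ∀ i, Filter.Tendsto (U i) (Filter.cocompact ℕ) (nhds 0) := by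
    intro i
    rw [Filter.cocompact_eq_cofinite, Nat.cofinite_eq_atTop, Metric.tendsto_atTop]
    intro ε hε
    obtain ⟨s, hs⟩ := exists_nat_one_div_lt hε
    refine ⟨A s, fun n hn => ?_⟩
    rw [dist_zero_right]
    exact (hUs s i n hn).trans_lt hs
  let u : Fin d → c0C := fun i => ⟨⟨U i, continuous_of_discreteTopology⟩, hUt i⟩
  have hu : ∀ i n, u i n = U i n := fun i n => rfl
  have hρ1 : ∀ s : ℕ, 1 / ((s : ℝ) + 1) ≤ 1 := by
    intro s
    rw [div_le_one (by positivity)]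
    linarith [Nat.cast_nonneg (α := ℝ) s]
  refine ⟨u, ?_, ?_⟩
  · intro i n
    rw [hu]
    exact (hUs 0 i n (by simp [hA0])).trans (hρ1 0)
  · intro s lam hlam
    obtain ⟨N, hN1, hN2, hN3, hN⟩ := hBN s (A s) lam (by push_cast; exact hlam)
    refine ⟨N, hN1, fun i n => ?_⟩
    rw [hu]
    have hNin := hN i n
    set F : ℝ := ((N + n + 1 : ℝ) / (n + 1)) ^ lam i with hF
    have hF0 : 0 ≤ F := by positivity
    have h2l : 0 < (2 : ℝ) ^ lam i := by positivity
    set ρ : ℝ := 1 / ((s : ℝ) + 1) with hρ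
    have hρp : 0 < ρ := hρ0 s
    have hρle : ρ ≤ 1 := hρ1 s
    have hε0 : 0 ≤ ρ / (V s + 1) := by have := hV0 s; positivity
    have hε1 := hερ s
    rw [← hρ] at hε1
    by_cases hc : N + n < A (s + 1)
    · rw [hUeq s i (N + n) (by omega) hc]
      have hz := hBε s (A s) i (N + n)
      set z := B s (A s) i (N + n) with hz'
      refine ⟨hNin.trans (hε1.trans (by nlinarith)), ?_⟩
      have h1 : F * ‖z‖ ^ m s ≤ V s + 1 := by
        have : F * ‖z‖ ^ m s = ‖(F : ℂ) * z ^ m s‖ := by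
          rw [norm_mul, norm_pow, Complex.norm_real, Real.norm_eq_abs, abs_of_nonneg hF0]
        rw [this]
        calc _ = ‖((F : ℂ) * z ^ m s - v s i n) + v s i n‖ := by rw [sub_add_cancel]
          _ ≤ _ := norm_add_le _ _
          _ ≤ V s + 1 := by linarith [hV s i n]
      calc F * ‖z‖ ^ (m s + 1) = (F * ‖z‖ ^ m s) * ‖z‖ := by ring
        _ ≤ (V s + 1) * (ρ / (V s + 1)) := by
          have := hV0 s
          gcongr
        _ = ρ := by have := hV0 s; field_simp
        _ ≤ _ := by nlinarith
    · push Not at hc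
      have hA' := hA1 s
      have hz := hUs (s + 1) i (N + n) hc
      have hz2 : ‖U i (N + n)‖ ≤ ρ := by
        refine hz.trans ?_
        rw [hρ]; push_cast; gcongr; linarith
      set z := U i (N + n) with hz'
      have hz1 : ‖z‖ ≤ 1 := hz2.trans hρle
      have hFle : F ≤ 2 ^ lam i := by
        refine Real.rpow_le_rpow (by positivity) ?_ ((hρ0 s).le.trans (hlam i).1)
        rw [div_le_iff₀ (by positivity)]
        have : N ≤ n := by omega
        have : (N : ℝ) ≤ n := by exact_mod_cast this
        linarith
      have hvle : ‖v s i n‖ ≤ ρ := by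
        rw [hBM s (A s) i (N + n) (by omega), zero_pow (by have := hm s; omega), mul_zero,
          zero_sub, norm_neg] at hNin
        exact hNin.trans hε1
      have hpw : ∀ k : ℕ, 1 ≤ k → F * ‖z‖ ^ k ≤ 2 ^ lam i * ρ := by
        intro k hk
        have : ‖z‖ ^ k ≤ ‖z‖ := pow_le_of_le_one (norm_nonneg _) hz1 (by omega)
        have : ‖z‖ ^ k ≤ ρ := this.trans hz2
        gcongr
      constructor
      · calc _ ≤ ‖(F : ℂ) * z ^ m s‖ + ‖v s i n‖ := norm_sub_le _ _
          _ = F * ‖z‖ ^ m s + ‖v s i n‖ := by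
            rw [norm_mul, norm_pow, Complex.norm_real, Real.norm_eq_abs, abs_of_nonneg hF0]
          _ ≤ 2 ^ lam i * ρ + ρ := add_le_add (hpw _ (hm s)) hvle
          _ = _ := by ring
      · have := hpw (m s + 1) (by omega)
        nlinarith

lemma poly_split (P : Polynomial ℂ) (hP : P ≠ 0) (h0 : P.coeff 0 = 0) :
    ∃ (m : ℕ) (a : ℂ) (C : ℝ), 1 ≤ m ∧ a ≠ 0 ∧ 0 ≤ C ∧
      ∀ z : ℂ, ‖z‖ ≤ 1 → ‖P.eval z - a * z ^ m‖ ≤ C * ‖z‖ ^ (m + 1) := by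
  obtain ⟨Q, hQ, hnd⟩ := Polynomial.exists_eq_pow_rootMultiplicity_mul_and_not_dvd P hP 0
  set m := Polynomial.rootMultiplicity 0 P
  rw [Polynomial.C_0, sub_zero] at hQ hnd
  have hQ0 : Q.coeff 0 ≠ 0 := fun h => hnd (Polynomial.X_dvd_iff.2 h)
  have hm : 1 ≤ m := by
    by_contra hm
    have hm0 : m = 0 := by omega
    rw [hm0, pow_zero, one_mul] at hQ
    exact hQ0 (hQ ▸ h0)
  obtain ⟨C, hC⟩ := (isCompact_closedBall (0 : ℂ) 1).exists_bound_of_continuousOn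
    (f := fun z => Q.divX.eval z) (Polynomial.continuous _).continuousOn
  refine ⟨m, Q.coeff 0, max C 0, hm, hQ0, le_max_right _ _, fun z hz => ?_⟩
  have e : P.eval z - Q.coeff 0 * z ^ m = Q.divX.eval z * z ^ (m + 1) := by
    have h1 : Q.eval z = Q.divX.eval z * z + Q.coeff 0 := by
      conv_lhs => rw [← Polynomial.divX_mul_X_add Q]
      simp
    rw [hQ, Polynomial.eval_mul, Polynomial.eval_pow, Polynomial.eval_X, h1]
    ring
  rw [e, norm_mul, norm_pow]
  gcongr
  exact (hC z (by simpa using hz)).trans (le_max_left _ _)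

lemma iterate_formula (d : ℕ) (T : (Fin d → c0C) →L[ℂ] (Fin d → c0C)) (lam : Fin d → ℝ)
    (hT : IsProductShiftC0 d (fun a n => (1 + 1 / (n : ℝ)) ^ a) T lam) (x : Fin d → c0C)
    (N : ℕ) : ∀ (i : Fin d) (n : ℕ),
    (T ^ N) x i n = ((((N + n + 1 : ℝ) / (n + 1)) ^ lam i : ℝ) : ℂ) * x i (N + n) := by
  induction N with
  | zero =>
    intro i n
    have : ((0 : ℕ) + n + 1 : ℝ) / (n + 1) = 1 := by
      rw [Nat.cast_zero, zero_add]; exact div_self (by positivity)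
    rw [this]; simp
  | succ N ih =>
    intro i n
    rw [pow_succ', mul_apply_eq_comp, hT, ih, ← mul_assoc, ← Complex.ofReal_mul,
      ← Real.mul_rpow (by positivity) (by positivity)]
    have e1 : (1 + 1 / ((n + 1 : ℕ) : ℝ)) * ((N + (n + 1 : ℕ) + 1 : ℝ) / ((n + 1 : ℕ) + 1)) =
        ((N + 1 : ℕ) + n + 1 : ℝ) / (n + 1) := by
      push_cast
      field_simp
      ring
    rw [e1, show N + (n + 1) = N + 1 + n by omega]

lemma c0_norm_le (d : ℕ) (x : Fin d → c0C) (C : ℝ) (hC : 0 ≤ C) (h : ∀ i n, ‖x i n‖ ≤ C) :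
    ‖x‖ ≤ C := by
  rw [pi_norm_le_iff_of_nonneg hC]
  intro i
  rw [← ZeroAtInftyContinuousMap.norm_toBCF_eq_norm, BoundedContinuousFunction.norm_le hC]
  exact h i

/-- Example 2.6 of the paper, case `X = c₀(ℕ)`, `w n (λ) = (1 + 1/n) ^ λ`. -/
theorem stmt_14 (d : ℕ) (hd : 1 ≤ d)
    (T : (Fin d → ℝ) → ((Fin d → c0C) →L[ℂ] (Fin d → c0C)))
    (hT : ∀ lam : Fin d → ℝ, (∀ i, 0 < lam i) →
      IsProductShiftC0 d (fun a n => (1 + 1 / (n : ℝ)) ^ a) (T lam) lam) :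
    CommonHypercyclicAlgebraCWC0 d {lam | ∀ i, 0 < lam i} T := by
  obtain ⟨m, L, v, hm, hv, htask⟩ := exists_tasks d
  obtain ⟨u, hu1, hu⟩ := exists_u d hd m L v hm hv
  have key : ∀ (P : Polynomial ℂ), P ≠ 0 → P.coeff 0 = 0 → ∀ x : Fin d → c0C,
      (∀ i n, x i n = P.eval (u i n)) → ∀ lam : Fin d → ℝ, (∀ i, 0 < lam i) →
      Dense (Set.range fun n : ℕ => ((T lam) ^ (n + 1)) x) := by
    intro P hP hP0 x hx lam hlam
    obtain ⟨k, a, C, hk, ha, hC, hPz⟩ := poly_split P hP hP0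
    have ha' : 0 < ‖a‖ := norm_pos_iff.2 ha
    rw [Metric.dense_iff]
    intro w r hr
    set Λ : ℝ := ∑ i, (1 + (2 : ℝ) ^ lam i) with hΛ
    have hΛi : ∀ i, 1 + (2 : ℝ) ^ lam i ≤ Λ := fun i =>
      Finset.single_le_sum (f := fun i => 1 + (2 : ℝ) ^ lam i) (fun _ _ => by positivity)
        (Finset.mem_univ i)
    have hΛ0 : 0 ≤ Λ := Finset.sum_nonneg fun _ _ => by positivity
    have e1 : ∀ᶠ s : ℕ in Filter.atTop, ∀ i, 1 / ((s : ℝ) + 1) < lam i := by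
      rw [Filter.eventually_all]
      intro i
      exact tendsto_one_div_add_atTop_nhds_zero_nat.eventually (gt_mem_nhds (hlam i))
    have e2 : ∀ᶠ s : ℕ in Filter.atTop, ∀ i, lam i ≤ (s : ℝ) := by
      rw [Filter.eventually_all]
      intro i
      exact tendsto_natCast_atTop_atTop.eventually (Filter.eventually_ge_atTop (lam i))
    have e3 : ∀ᶠ s : ℕ in Filter.atTop, (‖a‖ + C) * Λ * (1 / ((s : ℝ) + 1)) < r / 4 := by
      have h := (tendsto_one_div_add_atTop_nhds_zero_nat (𝕜 := ℝ)).const_mul ((‖a‖ + C) * Λ)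
      rw [mul_zero] at h
      exact h.eventually (gt_mem_nhds (by positivity))
    obtain ⟨S0, hS0⟩ := Filter.eventually_atTop.1 (e1.and (e2.and e3))
    obtain ⟨s, hs, hms, hvs⟩ := htask k hk (a⁻¹ • w) (r / (4 * ‖a‖)) (by positivity) S0
    obtain ⟨h1, h2, h3⟩ := hS0 s hs
    obtain ⟨N, hN1, hN⟩ := hu s lam (fun i => ⟨(h1 i).le, (h2 i).trans (by linarith)⟩)
    refine ⟨((T lam) ^ N) x, ?_, ⟨N - 1, by simp only [Nat.sub_add_cancel hN1]⟩⟩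
    rw [Metric.mem_ball, dist_eq_norm]
    refine lt_of_le_of_lt (c0_norm_le d _ (r / 2) (by positivity) ?_) (by linarith)
    intro i n
    have e : (((T lam) ^ N) x - w) i n = ((T lam) ^ N) x i n - w i n := rfl
    rw [e, iterate_formula d (T lam) lam (hT lam hlam) x N i n, hx]
    obtain ⟨g1, g2⟩ := hN i n
    rw [hms] at g1 g2
    have g3 := hPz (u i (N + n)) (hu1 _ _)
    have g4 := hvs i n
    have e5 : (a⁻¹ • w) i n = a⁻¹ * w i n := rfl
    rw [e5] at g4
    set F : ℝ := ((N + n + 1 : ℝ) / (n + 1)) ^ lam i with hF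
    have hF0 : 0 ≤ F := by positivity
    set z := u i (N + n)
    set ρ : ℝ := 1 / ((s : ℝ) + 1) with hρ
    have hρ0 : 0 < ρ := by positivity
    have hΛρ : (1 + (2 : ℝ) ^ lam i) * ρ ≤ Λ * ρ := by gcongr; exact hΛi i
    have e6 : (F : ℂ) * P.eval z - w i n = F * (P.eval z - a * z ^ k) +
        (a * (F * z ^ k - v s i n) + a * (v s i n - a⁻¹ * w i n)) := by
      field_simp
      ring
    rw [e6]
    have t1 : ‖(F : ℂ) * (P.eval z - a * z ^ k)‖ ≤ C * (Λ * ρ) := by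
      rw [norm_mul, Complex.norm_real, Real.norm_eq_abs, abs_of_nonneg hF0]
      calc F * _ ≤ F * (C * ‖z‖ ^ (k + 1)) := by gcongr
        _ = C * (F * ‖z‖ ^ (k + 1)) := by ring
        _ ≤ C * (Λ * ρ) := mul_le_mul_of_nonneg_left (g2.trans hΛρ) hC
    have t2 : ‖a * (F * z ^ k - v s i n)‖ ≤ ‖a‖ * (Λ * ρ) := by
      rw [norm_mul]
      gcongr
      exact g1.trans hΛρ
    have t3 : ‖a * (v s i n - a⁻¹ * w i n)‖ ≤ r / 4 := by
      rw [norm_mul]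
      calc _ ≤ ‖a‖ * (r / (4 * ‖a‖)) := by gcongr
        _ = r / 4 := by field_simp
    calc _ ≤ _ := norm_add_le _ _
      _ ≤ C * (Λ * ρ) + (‖a‖ * (Λ * ρ) + r / 4) :=
        add_le_add t1 ((norm_add_le _ _).trans (add_le_add t2 t3))
      _ = (‖a‖ + C) * Λ * ρ + r / 4 := by ring
      _ ≤ r / 2 := by linarith
  refine ⟨{x | ∃ P : Polynomial ℂ, P.coeff 0 = 0 ∧ ∀ i n, x i n = P.eval (u i n)},
    ?_, ?_, ?_, ?_, ?_, ?_⟩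
  · exact ⟨0, by simp, fun i n => by simp⟩
  · rintro x ⟨P, hP, hx⟩ y ⟨Q, hQ, hy⟩
    exact ⟨P + Q, by simp [hP, hQ], fun i n => by simp [hx, hy]⟩
  · rintro c x ⟨P, hP, hx⟩
    exact ⟨Polynomial.C c * P, by simp [hP], fun i n => by simp [hx]⟩
  · rintro x ⟨P, hP, hx⟩ y ⟨Q, hQ, hy⟩
    exact ⟨fun i => x i * y i, ⟨P * Q, by simp [Polynomial.mul_coeff_zero, hP],
      fun i n => by simp [hx, hy]⟩, fun i n => by simp⟩
  · refine ⟨u, ⟨Polynomial.X, by simp, fun i n => by simp⟩, ?_⟩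
    intro hu0
    have hden := key Polynomial.X Polynomial.X_ne_zero (by simp) u (fun i n => by simp)
      (fun _ => 1) (fun _ => one_pos)
    let f : ℕ → ℂ := fun n => if n = 0 then 1 else 0
    have hf : Filter.Tendsto f (Filter.cocompact ℕ) (nhds 0) := by
      rw [Filter.cocompact_eq_cofinite, Nat.cofinite_eq_atTop]
      refine tendsto_const_nhds.congr' ?_
      filter_upwards [Filter.eventually_ge_atTop 1] with n hn
      simp only [f]; rw [if_neg (by omega)]
    let y : Fin d → c0C := fun _ => ⟨⟨f, continuous_of_discreteTopology⟩, hf⟩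
    have hr : (Set.range fun n : ℕ => ((T fun _ => 1) ^ (n + 1)) u) = {0} := by
      rw [hu0]; simp
    rw [hr] at hden
    have hy : y ∈ closure ({0} : Set (Fin d → c0C)) := hden y
    rw [closure_singleton, Set.mem_singleton_iff] at hy
    have h1 : y ⟨0, hd⟩ 0 = 0 := by rw [hy]; rfl
    have h2 : y ⟨0, hd⟩ 0 = 1 := rfl
    rw [h1] at h2
    exact zero_ne_one h2
  · rintro x ⟨P, hP, hx⟩ hx0 lam hlam
    refine key P ?_ hP x hx lam hlam
    rintro rfl
    apply hx0
    funext i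
    ext n
    simp [hx]
end
end

section
/- Let p ∈ [1,∞) and let γ : [0,1] → (1,∞)² be a Lipschitz map with image Γ = γ([0,1]). For λ > 1, let λB denote the weighted backward shift on ℓp(ℕ) with constant weight λ, that is, (λB x)(n) = λ·x(n+1). Then the family (λB × μB)_{(λ,μ)∈Γ} admits a common hypercyclic algebra on ℓp(ℕ)² for the coordinatewise product; in particular it admits a common hypercyclic vector. -/
open scoped ENNReal
open Finset

noncomputable section

lemma ratio_bound {x y D : ℝ} (hx : 1 ≤ x) (hy : 1 ≤ y) (h : |x - y| ≤ D) (N : ℕ) :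
    (x / y) ^ N ≤ Real.exp (N * D) := by
  have hD : 0 ≤ D := (abs_nonneg _).trans h
  have h1 : x ≤ y + D := by linarith [le_abs_self (x - y)]
  have h2 : x / y ≤ Real.exp D := by
    rw [div_le_iff₀ (by linarith)]
    have := Real.add_one_le_exp D
    nlinarith
  calc (x / y) ^ N ≤ (Real.exp D) ^ N := pow_le_pow_left₀ (by positivity) h2 N
    _ = _ := by rw [← Real.exp_nat_mul]

lemma ratio_sub_one {x y D E : ℝ} (hx : 1 ≤ x) (hy : 1 ≤ y) (h : |x - y| ≤ D) (N : ℕ)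
    (hE : N * D ≤ E) : |(x / y) ^ N - 1| ≤ Real.exp E - 1 := by
  have h1 := (ratio_bound hx hy h N).trans (Real.exp_le_exp.2 hE)
  have h2 := (ratio_bound hy hx (by rwa [abs_sub_comm]) N).trans (Real.exp_le_exp.2 hE)
  have h3 : (y / x) ^ N = ((x / y) ^ N)⁻¹ := by rw [← inv_pow, inv_div]
  have h4 : 0 < (x / y) ^ N := by positivity
  rw [h3] at h2
  rw [abs_le]
  constructor
  · have h5 : 1 ≤ Real.exp E * (x / y) ^ N := by
      rwa [inv_le_iff_one_le_mul₀ h4] at h2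
    have h6 : 0 < Real.exp E := Real.exp_pos E
    nlinarith [sq_nonneg (Real.exp E - 1), mul_nonneg h6.le (sq_nonneg ((x / y) ^ N - 1)), sq_nonneg ((x / y) ^ N - 1)]
  · linarith

/-- The parameter grid. -/
def gridT (τ : ℝ) (M N0 l : ℕ) : ℝ := τ / M * Real.log (((N0 + l * M : ℕ) : ℝ) / N0)

lemma gridT_sub {τ : ℝ} (hτ : 0 < τ) {M N0 : ℕ} (hM : 0 < M) (hN : 0 < N0) (i d : ℕ) :
    0 ≤ gridT τ M N0 (i + d) - gridT τ M N0 i ∧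
    ((N0 + i * M : ℕ) : ℝ) * (gridT τ M N0 (i + d) - gridT τ M N0 i) ≤ τ * d := by
  have hM' : (0 : ℝ) < M := by exact_mod_cast hM
  have hN' : (0 : ℝ) < N0 := by exact_mod_cast hN
  have hNi : (0 : ℝ) < ((N0 + i * M : ℕ) : ℝ) := by exact_mod_cast (by positivity)
  have hNd : (0 : ℝ) < ((N0 + (i + d) * M : ℕ) : ℝ) := by exact_mod_cast (by positivity)
  have e : gridT τ M N0 (i + d) - gridT τ M N0 i =
      τ / M * Real.log (((N0 + (i + d) * M : ℕ) : ℝ) / ((N0 + i * M : ℕ) : ℝ)) := by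
    unfold gridT
    rw [Real.log_div hNd.ne' hN'.ne', Real.log_div hNi.ne' hN'.ne', Real.log_div hNd.ne' hNi.ne']
    ring
  have e2 : ((N0 + (i + d) * M : ℕ) : ℝ) / ((N0 + i * M : ℕ) : ℝ) = 1 + d * M / ((N0 + i * M : ℕ) : ℝ) := by
    field_simp
    push_cast; ring
  have h0 : 0 ≤ d * M / ((N0 + i * M : ℕ) : ℝ) := by positivity
  rw [e, e2]
  constructor
  · exact mul_nonneg (by positivity) (Real.log_nonneg (by linarith))
  · have := Real.log_le_sub_one_of_pos (x := 1 + d * M / ((N0 + i * M : ℕ) : ℝ)) (by linarith)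
    calc _ ≤ ((N0 + i * M : ℕ) : ℝ) * (τ / M * (d * M / ((N0 + i * M : ℕ) : ℝ))) := by
          gcongr; linarith
      _ = τ * d := by field_simp

lemma stage1 (lam : ℝ → ℝ) (L : ℝ) (hL0 : 0 ≤ L)
    (hL : ∀ s ∈ Set.Icc (0:ℝ) 1, ∀ t ∈ Set.Icc (0:ℝ) 1, |lam s - lam t| ≤ L * |s - t|)
    (c : ℝ) (hc : 1 < c) (hlam : ∀ t ∈ Set.Icc (0:ℝ) 1, c ^ 2 ≤ lam t)
    (v : ℕ → ℂ) (V : ℝ) (hV : ∀ n, ‖v n‖ ≤ V) (q : ℕ) (hq : ∀ n, q ≤ n → v n = 0)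
    (m : ℕ) (hm : 1 ≤ m) (τ : ℝ) (hτ : 0 < τ) (M : ℕ) (hM : 0 < M) (hqM : q ≤ M)
    (hτM : Real.exp (L * τ) ≤ c ^ M) (N0 : ℕ) (hN0 : 0 < N0) (H : ℕ)
    (hT : ∀ l ≤ H, gridT τ M N0 l ∈ Set.Icc (0:ℝ) 1) :
    ∃ w : ℕ → ℂ, (∀ k, w k ≠ 0 → N0 ≤ k ∧ k < N0 + (H + 1) * M) ∧
      (∀ k, ‖w k‖ ^ m ≤ V * (c ^ 2) ^ q * ((c ^ 2)⁻¹) ^ k) ∧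
      ∀ i ≤ H, ∀ t ∈ Set.Icc (0:ℝ) 1, gridT τ M N0 i ≤ t → t ≤ gridT τ M N0 (i + 1) →
        ∀ n, ‖(lam t : ℂ) ^ (N0 + i * M) * w (N0 + i * M + n) ^ m - v n‖ ≤
          (if n < q then V * (Real.exp (L * τ) - 1) else 0) +
          (if n < M then 0 else V * c ^ q * (c⁻¹) ^ n) := by
  have hV0 : 0 ≤ V := (norm_nonneg _).trans (hV 0)
  have hroot : ∀ z : ℂ, ∃ r : ℂ, r ^ m = z := fun z => IsAlgClosed.exists_pow_nat_eq z (by omega)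
  choose root hr using hroot
  have hr0 : root 0 = 0 := by
    have := hr 0
    exact pow_eq_zero_iff (by omega) |>.1 this
  have hc0 : 0 < c := by linarith
  let g : ℕ → ℕ → ℂ := fun b j =>
    if b ≤ H then v j / (lam (gridT τ M N0 b) : ℂ) ^ (N0 + b * M) else 0
  let w : ℕ → ℂ := fun k => if N0 ≤ k then root (g ((k - N0) / M) ((k - N0) % M)) else 0
  have hw : ∀ b j, j < M → w (N0 + b * M + j) ^ m = g b j := by
    intro b j hj
    have h1 : N0 + b * M + j - N0 = b * M + j := by omega
    have h2 : (b * M + j) / M = b := by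
      rw [mul_comm, Nat.mul_add_div hM, Nat.div_eq_of_lt hj, add_zero]
    have h3 : (b * M + j) % M = j := by
      rw [mul_comm, Nat.mul_add_mod, Nat.mod_eq_of_lt hj]
    simp only [w]
    rw [if_pos (by omega), hr, h1, h2, h3]
  have hdec : ∀ k, N0 ≤ k → ∃ b j, j < M ∧ k = N0 + b * M + j := by
    intro k hk
    refine ⟨(k - N0) / M, (k - N0) % M, Nat.mod_lt _ hM, ?_⟩
    have := Nat.div_add_mod (k - N0) M
    rw [mul_comm] at this
    omega
  have hlam1 : ∀ t ∈ Set.Icc (0:ℝ) 1, 1 ≤ lam t := fun t ht =>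
    le_trans (one_le_pow₀ hc.le) (hlam t ht)
  refine ⟨w, ?_, ?_, ?_⟩
  · intro k hk
    have h1 : N0 ≤ k := by
      by_contra h
      exact hk (by simp only [w]; rw [if_neg h])
    refine ⟨h1, ?_⟩
    by_contra h2
    obtain ⟨b, j, hj, rfl⟩ := hdec k h1
    have hb : ¬ b ≤ H := by
      intro hb
      have : b * M ≤ H * M := Nat.mul_le_mul_right _ hb
      have : (H + 1) * M = H * M + M := by ring
      omega
    have := hw b j hj
    simp only [g] at this
    rw [if_neg hb] at this
    exact hk (pow_eq_zero_iff (by omega) |>.1 this)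
  · intro k
    have hR : 0 ≤ V * (c ^ 2) ^ q * ((c ^ 2)⁻¹) ^ k := by positivity
    by_cases h1 : N0 ≤ k
    · obtain ⟨b, j, hj, rfl⟩ := hdec k h1
      rw [← norm_pow, hw b j hj]
      simp only [g]
      split_ifs with hb
      · by_cases hjq : j < q
        · have hl := hlam _ (hT b hb)
          have hl1 := hlam1 _ (hT b hb)
          rw [norm_div, norm_pow, Complex.norm_real, Real.norm_of_nonneg (by linarith)]
          calc ‖v j‖ / lam (gridT τ M N0 b) ^ (N0 + b * M) ≤ V / (c ^ 2) ^ (N0 + b * M) := by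
                gcongr; exact hV j
            _ = V * (c ^ 2) ^ j * ((c ^ 2)⁻¹) ^ (N0 + b * M + j) := by
                rw [pow_add (c ^ 2)⁻¹, inv_pow, inv_pow]
                field_simp
            _ ≤ _ := by
                gcongr
                · exact one_le_pow₀ hc.le
        · rw [hq j (by omega)]; simpa using hR
      · simpa using hR
    · simp only [w]
      rw [if_neg h1]
      simpa [show m ≠ 0 by omega] using hR
  · intro i hi t ht hit hti n
    have e0 : 0 ≤ Real.exp (L * τ) - 1 := by
      linarith [Real.one_le_exp (mul_nonneg hL0 hτ.le)]
    have t1 : 0 ≤ (if n < q then V * (Real.exp (L * τ) - 1) else 0) := by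
      split_ifs
      · positivity
      · exact le_rfl
    have t2 : 0 ≤ (if n < M then 0 else V * c ^ q * (c⁻¹) ^ n) := by
      split_ifs
      · exact le_rfl
      · positivity
    have hli := hlam1 _ (hT i hi)
    have hlt := hlam1 _ ht
    obtain ⟨d, j, hj, rfl⟩ : ∃ d j, j < M ∧ n = d * M + j := by
      refine ⟨n / M, n % M, Nat.mod_lt _ hM, ?_⟩
      have := Nat.div_add_mod n M
      rw [mul_comm] at this
      omega
    have hidx : N0 + i * M + (d * M + j) = N0 + (i + d) * M + j := by ring
    rw [hidx, hw _ _ hj]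
    rcases Nat.eq_zero_or_pos d with rfl | hd
    · simp only [zero_mul, zero_add, add_zero] at *
      simp only [g]
      rw [if_pos hi]
      by_cases hjq : j < q
      · refine le_trans ?_ (le_add_of_nonneg_right t2)
        rw [if_pos hjq]
        have e1 : (lam t : ℂ) ^ (N0 + i * M) * (v j / (lam (gridT τ M N0 i) : ℂ) ^ (N0 + i * M)) - v j
            = v j * (((lam t / lam (gridT τ M N0 i)) ^ (N0 + i * M) - 1 : ℝ) : ℂ) := by
          push_cast; rw [div_pow]; ring
        rw [e1, norm_mul, Complex.norm_real, Real.norm_eq_abs]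
        refine mul_le_mul (hV j) ?_ (abs_nonneg _) hV0
        refine ratio_sub_one hlt hli (hL _ ht _ (hT i hi)) _ ?_
        have h3 := (gridT_sub hτ hM hN0 i 1).2
        rw [abs_of_nonneg (by linarith)]
        have h4 : ((N0 + i * M : ℕ) : ℝ) * (t - gridT τ M N0 i) ≤ τ := by
          refine le_trans ?_ (h3.trans (by simp))
          gcongr
        calc _ = L * (((N0 + i * M : ℕ) : ℝ) * (t - gridT τ M N0 i)) := by ring
          _ ≤ _ := by gcongr
      · rw [hq j (by omega)]
        simpa using add_nonneg t1 t2
    · have hdM : M ≤ d * M := Nat.le_mul_of_pos_left _ hd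
      rw [hq (d * M + j) (by omega), sub_zero]
      refine le_trans ?_ (le_add_of_nonneg_left t1)
      rw [if_neg (by omega)] at t2 ⊢
      simp only [g]
      split_ifs with hid
      · by_cases hjq : j < q
        · have hTl := hT _ hid
          have hll := hlam1 _ hTl
          have hlc := hlam _ hTl
          set l := lam (gridT τ M N0 (i + d)) with hldef
          have e1 : (lam t : ℂ) ^ (N0 + i * M) * (v j / (l : ℂ) ^ (N0 + (i + d) * M))
            = v j * (((lam t / l) ^ (N0 + i * M) * (l⁻¹) ^ (d * M) : ℝ) : ℂ) := by
            have : (l : ℂ) ≠ 0 := by exact_mod_cast (by linarith)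
            push_cast
            rw [show N0 + (i + d) * M = (N0 + i * M) + d * M by ring, pow_add (l : ℂ), div_pow, inv_pow]
            field_simp
          rw [e1, norm_mul, Complex.norm_real, Real.norm_of_nonneg (by positivity)]
          have h3 := (gridT_sub hτ hM hN0 i d).2
          have h5 := (gridT_sub hτ hM hN0 (i + 1) (d - 1)).1
          rw [show i + 1 + (d - 1) = i + d by omega] at h5
          have hr1 := ratio_bound hlt hll (hL _ ht _ hTl) (N0 + i * M)
          have hr2 : (lam t / l) ^ (N0 + i * M) ≤ (c ^ M) ^ d := by
            refine hr1.trans (le_trans ?_ (pow_le_pow_left₀ (Real.exp_pos _).le hτM d))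
            rw [← Real.exp_nat_mul, Real.exp_le_exp, abs_sub_comm, abs_of_nonneg (by linarith)]
            calc _ = L * (((N0 + i * M : ℕ) : ℝ) * (gridT τ M N0 (i + d) - t)) := by ring
              _ ≤ L * (((N0 + i * M : ℕ) : ℝ) * (gridT τ M N0 (i + d) - gridT τ M N0 i)) := by
                gcongr
              _ ≤ L * (τ * d) := by gcongr
              _ = _ := by ring
          have hr3 : (l⁻¹) ^ (d * M) ≤ ((c ^ 2)⁻¹) ^ (d * M) := by gcongr
          calc ‖v j‖ * ((lam t / l) ^ (N0 + i * M) * (l⁻¹) ^ (d * M))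
              ≤ V * ((c ^ M) ^ d * ((c ^ 2)⁻¹) ^ (d * M)) := by
                gcongr; exact hV j
            _ = V * c ^ j * (c⁻¹) ^ (d * M + j) := by
                rw [← pow_mul, mul_comm M d, pow_add c⁻¹, inv_pow, inv_pow, inv_pow, ← pow_mul]
                field_simp
                ring
            _ ≤ _ := by
                gcongr
                exact hc.le
        · rw [hq j (by omega)]; simpa using t2
      · simpa using t2

lemma geom_tail {D x : ℝ} (hD : 0 ≤ D) (hx0 : 0 ≤ x) (hx1 : x < 1) (M K : ℕ) :
    ∑ n ∈ range K, (if n < M then 0 else D * x ^ n) ≤ D * x ^ M * (1 - x)⁻¹ := by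
  have hpos : ∀ n, 0 ≤ (if n < M then 0 else D * x ^ n) := by
    intro n; split_ifs
    · exact le_rfl
    · positivity
  calc ∑ n ∈ range K, (if n < M then 0 else D * x ^ n)
      ≤ ∑ n ∈ range (M + K), (if n < M then 0 else D * x ^ n) := by
        apply Finset.sum_le_sum_of_subset_of_nonneg
        · intro n; simp only [Finset.mem_range]; omega
        · intro n _ _; exact hpos n
    _ = ∑ j ∈ range K, D * x ^ M * x ^ j := by
        rw [Finset.sum_range_add, Finset.sum_eq_zero, zero_add]
        · apply Finset.sum_congr rfl
          intro j _
          rw [if_neg (by omega), pow_add]; ring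
        · intro n hn
          rw [if_pos (Finset.mem_range.1 hn)]
    _ = D * x ^ M * ∑ j ∈ range K, x ^ j := by rw [Finset.mul_sum]
    _ ≤ _ := by
        gcongr
        rw [← tsum_geometric_of_lt_one hx0 hx1]
        exact (summable_geometric_of_lt_one hx0 hx1).sum_le_tsum _ (fun _ _ => by positivity)

lemma gridT_le_iff {τ : ℝ} (hτ : 0 < τ) {M N0 : ℕ} (hM : 0 < M) (hN : 0 < N0) (l : ℕ) (t : ℝ) :
    gridT τ M N0 l ≤ t ↔ (l : ℝ) ≤ N0 * (Real.exp (M * t / τ) - 1) / M := by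
  have hM' : (0 : ℝ) < M := by exact_mod_cast hM
  have hN' : (0 : ℝ) < N0 := by exact_mod_cast hN
  have hNl : (0 : ℝ) < ((N0 + l * M : ℕ) : ℝ) := by exact_mod_cast (by positivity)
  have h1 : gridT τ M N0 l ≤ t ↔ Real.log (((N0 + l * M : ℕ) : ℝ) / N0) ≤ M * t / τ := by
    unfold gridT
    rw [le_div_iff₀ hτ, div_mul_eq_mul_div, div_le_iff₀ hM', mul_comm τ, mul_comm t]
  rw [h1, Real.log_le_iff_le_exp (by positivity), div_le_iff₀ hN', le_div_iff₀ hM']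
  push_cast
  constructor <;> intro h <;> linarith

lemma gridT_nonneg {τ : ℝ} (hτ : 0 < τ) {M N0 : ℕ} (hM : 0 < M) (hN : 0 < N0) (l : ℕ) :
    0 ≤ gridT τ M N0 l := by
  have := (gridT_sub hτ hM hN 0 l).1
  have hN' : (N0 : ℝ) ≠ 0 := by exact_mod_cast hN.ne'
  have h0 : gridT τ M N0 0 = 0 := by simp [gridT, hN']
  rw [h0, zero_add] at this
  linarith

lemma stage_s15 (γ : ℝ → (Fin 2 → ℝ)) (L : ℝ) (hL0 : 0 ≤ L)
    (hL : ∀ i, ∀ s ∈ Set.Icc (0:ℝ) 1, ∀ t ∈ Set.Icc (0:ℝ) 1, |γ s i - γ t i| ≤ L * |s - t|)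
    (c : ℝ) (hc : 1 < c) (hlam : ∀ i, ∀ t ∈ Set.Icc (0:ℝ) 1, c ^ 2 ≤ γ t i)
    (n0 m q : ℕ) (hm : 1 ≤ m) (v : Fin 2 → ℕ → ℂ) (hq : ∀ i n, q ≤ n → v i n = 0)
    (δ ε : ℝ) (hδ : 0 < δ) (hε : 0 < ε) :
    ∃ (w : Fin 2 → ℕ → ℂ) (M : ℕ), n0 < M ∧ (∀ i k, w i k ≠ 0 → n0 ≤ k ∧ k < M) ∧
      (∀ i K, ∑ k ∈ range K, ‖w i k‖ ≤ δ) ∧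
      ∀ t ∈ Set.Icc (0:ℝ) 1, ∃ N, n0 ≤ N ∧ N < M ∧ ∀ i K,
        ∑ n ∈ range K, ‖(γ t i : ℂ) ^ N * w i (N + n) ^ m - v i n‖ ≤ ε := by
  have hc0 : 0 < c := by linarith
  obtain ⟨V, hV⟩ : ∃ V : ℝ, ∀ i n, ‖v i n‖ ≤ V := by
    refine ⟨∑ i, ∑ n ∈ range q, ‖v i n‖, fun i n => ?_⟩
    by_cases hn : n < q
    · calc ‖v i n‖ ≤ ∑ n ∈ range q, ‖v i n‖ :=
          Finset.single_le_sum (f := fun n => ‖v i n‖) (fun _ _ => norm_nonneg _) (Finset.mem_range.2 hn)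
        _ ≤ _ := Finset.single_le_sum (f := fun i => ∑ n ∈ range q, ‖v i n‖)
          (fun _ _ => Finset.sum_nonneg fun _ _ => norm_nonneg _) (Finset.mem_univ i)
    · rw [hq i n (by omega), norm_zero]
      exact Finset.sum_nonneg fun _ _ => Finset.sum_nonneg fun _ _ => norm_nonneg _
  have hV0 : 0 ≤ V := (norm_nonneg _).trans (hV 0 0)
  obtain ⟨τ, hτ1, hτ⟩ : ∃ τ : ℝ, q * (V * (Real.exp (L * τ) - 1)) < ε / 2 ∧ 0 < τ := by
    have hcont : Continuous fun τ : ℝ => q * (V * (Real.exp (L * τ) - 1)) := by fun_prop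
    have h1 := hcont.tendsto 0
    have h2 : ∀ᶠ τ in nhds (0:ℝ), q * (V * (Real.exp (L * τ) - 1)) < ε / 2 := by
      apply h1.eventually_lt_const
      simp; linarith
    have h3 : ∀ᶠ τ in nhdsWithin (0:ℝ) (Set.Ioi 0), q * (V * (Real.exp (L * τ) - 1)) < ε / 2 ∧ 0 < τ :=
      (h2.filter_mono nhdsWithin_le_nhds).and self_mem_nhdsWithin
    exact h3.exists
  have hci0 : 0 ≤ c⁻¹ := by positivity
  have hci1 : c⁻¹ < 1 := inv_lt_one_of_one_lt₀ hc
  obtain ⟨M, hM, hqM, hτM, hMε⟩ : ∃ M : ℕ, 0 < M ∧ q ≤ M ∧ Real.exp (L * τ) ≤ c ^ M ∧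
      V * c ^ q * c⁻¹ ^ M * (1 - c⁻¹)⁻¹ < ε / 2 := by
    have h1 := (tendsto_pow_atTop_atTop_of_one_lt hc).eventually_ge_atTop (Real.exp (L * τ))
    have h2 : Filter.Tendsto (fun M : ℕ => V * c ^ q * c⁻¹ ^ M * (1 - c⁻¹)⁻¹) Filter.atTop (nhds (V * c ^ q * 0 * (1 - c⁻¹)⁻¹)) :=
      ((tendsto_pow_atTop_nhds_zero_of_lt_one hci0 hci1).const_mul _).mul_const _
    have h3 := h2.eventually_lt_const (u := ε / 2) (by simp; linarith)
    exact ((Filter.eventually_gt_atTop 0).and ((Filter.eventually_ge_atTop q).and (h1.and h3))).exists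
  have hm0 : m ≠ 0 := by omega
  obtain ⟨C, hC0, hC⟩ : ∃ C : ℝ, 0 ≤ C ∧ C ^ m = V * (c ^ 2) ^ q :=
    ⟨(V * (c ^ 2) ^ q) ^ ((m : ℝ)⁻¹), by positivity, Real.rpow_inv_natCast_pow (by positivity) hm0⟩
  obtain ⟨ρ, hρ0, hρ⟩ : ∃ ρ : ℝ, 0 ≤ ρ ∧ ρ ^ m = (c ^ 2)⁻¹ :=
    ⟨((c ^ 2)⁻¹) ^ ((m : ℝ)⁻¹), by positivity, Real.rpow_inv_natCast_pow (by positivity) hm0⟩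
  have hρ1 : ρ < 1 := by
    by_contra h
    have h1 : 1 ≤ ρ ^ m := one_le_pow₀ (not_lt.1 h)
    have h2 : (c ^ 2)⁻¹ < 1 := inv_lt_one_of_one_lt₀ (one_lt_pow₀ hc (by norm_num))
    linarith
  obtain ⟨N0, hN0, hn0, hNδ⟩ : ∃ N0 : ℕ, 0 < N0 ∧ n0 ≤ N0 ∧ C * ρ ^ N0 * (1 - ρ)⁻¹ < δ := by
    have h2 : Filter.Tendsto (fun M : ℕ => C * ρ ^ M * (1 - ρ)⁻¹) Filter.atTop (nhds (C * 0 * (1 - ρ)⁻¹)) :=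
      ((tendsto_pow_atTop_nhds_zero_of_lt_one hρ0 hρ1).const_mul _).mul_const _
    have h3 := h2.eventually_lt_const (u := δ) (by simpa using hδ)
    exact ((Filter.eventually_gt_atTop 0).and ((Filter.eventually_ge_atTop n0).and h3)).exists
  have hM' : (0 : ℝ) < M := by exact_mod_cast hM
  let φ : ℝ → ℝ := fun t => N0 * (Real.exp (M * t / τ) - 1) / M
  have hφ0 : ∀ t, 0 ≤ t → 0 ≤ φ t := by
    intro t ht
    have : 1 ≤ Real.exp (M * t / τ) := Real.one_le_exp (by positivity)
    have : 0 ≤ Real.exp (M * t / τ) - 1 := by linarith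
    simp only [φ]; positivity
  have hφm : ∀ t, t ≤ 1 → φ t ≤ φ 1 := by
    intro t ht
    simp only [φ]; gcongr
  let H : ℕ := ⌊φ 1⌋₊
  have hT : ∀ l ≤ H, gridT τ M N0 l ∈ Set.Icc (0:ℝ) 1 := by
    intro l hl
    refine ⟨gridT_nonneg hτ hM hN0 l, (gridT_le_iff hτ hM hN0 l 1).2 ?_⟩
    exact (Nat.le_floor_iff (hφ0 1 zero_le_one)).1 hl
  have hst := fun i => stage1 (fun t => γ t i) L hL0 (hL i) c hc (hlam i) (v i) V (hV i) q (hq i) m hm τ hτ M hM hqM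
    hτM N0 hN0 H hT
  choose w hw1 hw2 hw3 using hst
  refine ⟨w, N0 + (H + 1) * M, ?_, ?_, ?_, ?_⟩
  · have : 0 < (H + 1) * M := by positivity
    omega
  · intro i k hk
    exact ⟨hn0.trans (hw1 i k hk).1, (hw1 i k hk).2⟩
  · intro i K
    refine le_trans ?_ hNδ.le
    refine le_trans (Finset.sum_le_sum fun k _ => ?_) (geom_tail hC0 hρ0 hρ1 N0 K)
    split_ifs with hk
    · have : w i k = 0 := by
        by_contra h
        have := (hw1 i k h).1
        omega
      simp [this]
    · refine le_of_pow_le_pow_left₀ hm0 (by positivity) ?_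
      refine (hw2 i k).trans (le_of_eq ?_)
      rw [mul_pow, hC, ← hρ, ← pow_mul ρ, ← pow_mul ρ, mul_comm m k]
  · intro t ht
    let l : ℕ := ⌊φ t⌋₊
    have hlH : l ≤ H := Nat.floor_le_floor (hφm t ht.2)
    have hl1 : gridT τ M N0 l ≤ t := (gridT_le_iff hτ hM hN0 l t).2 (Nat.floor_le (hφ0 t ht.1))
    have hl2 : t ≤ gridT τ M N0 (l + 1) := by
      by_contra h
      have := (gridT_le_iff hτ hM hN0 (l + 1) t).1 (not_le.1 h).le
      have h2 := Nat.lt_floor_add_one (φ t)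
      push_cast at this
      simp only [l, φ] at this h2
      linarith
    refine ⟨N0 + l * M, by omega, ?_, ?_⟩
    · have : l * M ≤ H * M := Nat.mul_le_mul_right _ hlH
      have : (H + 1) * M = H * M + M := by ring
      omega
    · intro i K
      refine (Finset.sum_le_sum fun n _ => hw3 i l hlH t ht hl1 hl2 n).trans ?_
      rw [Finset.sum_add_distrib]
      have h1 := geom_tail (D := V * c ^ q) (by positivity) hci0 hci1 M K
      have h2 : ∑ n ∈ range K, (if n < q then V * (Real.exp (L * τ) - 1) else 0) ≤
          q * (V * (Real.exp (L * τ) - 1)) := by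
        rw [← Finset.sum_filter, Finset.sum_const, nsmul_eq_mul]
        have e0 : 0 ≤ Real.exp (L * τ) - 1 := by
          linarith [Real.one_le_exp (mul_nonneg hL0 hτ.le)]
        gcongr
        calc _ ≤ (range q).card := Finset.card_le_card (by intro n; simp)
          _ = q := Finset.card_range q
      linarith

/-- A countable family of finitely supported targets. -/
def target (q k : ℕ) (i : Fin 2) (n : ℕ) : ℂ :=
  if h : n < q then TopologicalSpace.denseSeq (Fin 2 → Fin q → ℂ) k i ⟨n, h⟩ else 0

lemma core_s15 (γ : ℝ → (Fin 2 → ℝ)) (L : ℝ) (hL0 : 0 ≤ L)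
    (hL : ∀ i, ∀ s ∈ Set.Icc (0:ℝ) 1, ∀ t ∈ Set.Icc (0:ℝ) 1, |γ s i - γ t i| ≤ L * |s - t|)
    (c : ℝ) (hc : 1 < c) (hlam : ∀ i, ∀ t ∈ Set.Icc (0:ℝ) 1, c ^ 2 ≤ γ t i)
    (Λ : ℝ) (hΛ1 : 1 ≤ Λ) (hΛ : ∀ i, ∀ t ∈ Set.Icc (0:ℝ) 1, γ t i ≤ Λ) :
    ∃ u : Fin 2 → ℕ → ℂ, (∀ i, Summable fun n => ‖u i n‖) ∧
      ∀ t ∈ Set.Icc (0:ℝ) 1, ∀ m q k : ℕ, ∀ ε : ℝ, 0 < ε → ∀ n0 : ℕ, ∃ N, n0 ≤ N ∧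
        ∀ i K, ∑ n ∈ range K, ‖(γ t i : ℂ) ^ N * u i (N + n) ^ (m + 1) - target q k i n‖ ≤ ε := by
  obtain ⟨e, he⟩ := exists_surjective_nat (ℕ × (ℕ × ℕ × ℕ))
  let δ : ℕ → ℝ := fun n => ((2 * Λ)⁻¹) ^ n
  have hδ : ∀ n, 0 < δ n := fun n => by simp only [δ]; positivity
  have hst := fun s n0 : ℕ => stage_s15 γ L hL0 hL c hc hlam n0 ((e s).2.1 + 1) (e s).2.2.1 (by omega)
    (target (e s).2.2.1 (e s).2.2.2) (by
      intro i n hn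
      unfold target
      rw [dif_neg (by omega)]) (δ n0) (1 / ((s : ℝ) + 1)) (hδ n0) (by positivity)
  choose W Mx hM hW1 hW2 hW3 using hst
  obtain ⟨S, hS0, hS1⟩ : ∃ S : ℕ → ℕ, S 0 = 0 ∧ ∀ s, S (s + 1) = Mx s (S s) :=
    ⟨fun s => Nat.rec (motive := fun _ => ℕ) 0 (fun s n => Mx s n) s, rfl, fun _ => rfl⟩
  have hSlt : ∀ s, S s < S (s + 1) := fun s => by rw [hS1]; exact hM s (S s)
  have hSm : StrictMono S := strictMono_nat_of_lt_succ hSlt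
  have hSge : ∀ s, s ≤ S s := hSm.id_le
  have hSadd : ∀ s d, S s + d ≤ S (s + d) := by
    intro s d
    induction d with
    | zero => simp
    | succ d ih => have := hSlt (s + d); rw [← add_assoc s d 1]; omega
  let w : ℕ → Fin 2 → ℕ → ℂ := fun s => W s (S s)
  have hw1 : ∀ s i k, w s i k ≠ 0 → S s ≤ k ∧ k < S (s + 1) := fun s i k h => by
    rw [hS1]; exact hW1 s (S s) i k h
  let u : Fin 2 → ℕ → ℂ := fun i k => ∑ s ∈ range (k + 1), w s i k
  have hu : ∀ s i k, S s ≤ k → k < S (s + 1) → u i k = w s i k := by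
    intro s i k h1 h2
    simp only [u]
    apply Finset.sum_eq_single
    · intro r _ hrs
      by_contra h
      obtain ⟨h3, h4⟩ := hw1 r i k h
      rcases lt_or_gt_of_ne hrs with h5 | h5
      · have := hSm.monotone (show r + 1 ≤ s by omega); omega
      · have := hSm.monotone (show s + 1 ≤ r by omega); omega
    · intro h
      exfalso; apply h
      have := hSge s
      simp only [Finset.mem_range]; omega
  have htail : ∀ (s : ℕ) (i : Fin 2) (K : ℕ), ∑ k ∈ range K, (if (k : ℕ) < (S s : ℕ) then (0 : ℝ) else ‖u i k‖) ≤ 2 * δ (S s) := by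
    intro s i K
    calc ∑ k ∈ range K, (if k < S s then 0 else ‖u i k‖)
        ≤ ∑ k ∈ range K, ∑ r ∈ range K, (if r < s then 0 else ‖w r i k‖) := by
          apply Finset.sum_le_sum
          intro k hk
          rw [Finset.mem_range] at hk
          split_ifs with h
          · apply Finset.sum_nonneg
            intro r _; split_ifs <;> positivity
          · calc ‖u i k‖ ≤ ∑ r ∈ range (k + 1), ‖w r i k‖ := norm_sum_le _ _
              _ ≤ ∑ r ∈ range (k + 1), (if r < s then 0 else ‖w r i k‖) := by
                apply Finset.sum_le_sum
                intro r _
                split_ifs with hr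
                · have : w r i k = 0 := by
                    by_contra h'
                    have h3 := (hw1 r i k h').2
                    have := hSm.monotone (show r + 1 ≤ s by omega); omega
                  simp [this]
                · exact le_rfl
              _ ≤ _ := by
                apply Finset.sum_le_sum_of_subset_of_nonneg
                · intro r; simp only [Finset.mem_range]; omega
                · intro r _ _; split_ifs <;> positivity
      _ = ∑ r ∈ range K, ∑ k ∈ range K, (if r < s then 0 else ‖w r i k‖) := Finset.sum_comm
      _ ≤ ∑ r ∈ range K, (if r < s then 0 else (δ (S s) * 2 ^ s) * (1 / 2) ^ r) := by
          apply Finset.sum_le_sum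
          intro r _
          split_ifs with h
          · simp
          · refine (hW2 r (S r) i K).trans ?_
            obtain ⟨d, rfl⟩ := Nat.exists_eq_add_of_le (not_lt.1 h)
            have h1 : δ (S (s + d)) ≤ δ (S s + d) := by
              apply pow_le_pow_of_le_one (by positivity) _ (hSadd s d)
              apply inv_le_one_of_one_le₀; linarith
            have h2 : δ (S s + d) = δ (S s) * ((2 * Λ)⁻¹) ^ d := by simp only [δ]; rw [pow_add]
            have h3 : ((2 * Λ)⁻¹) ^ d ≤ (1 / 2 : ℝ) ^ d := by
              gcongr
              rw [one_div]
              gcongr; linarith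
            calc _ ≤ δ (S s) * ((2 * Λ)⁻¹) ^ d := by rw [← h2]; exact h1
              _ ≤ δ (S s) * (1 / 2 : ℝ) ^ d := by
                have := hδ (S s); gcongr
              _ = _ := by
                rw [pow_add, mul_assoc, ← mul_assoc (2 ^ s), ← mul_pow]; norm_num
      _ ≤ _ := geom_tail (by have := hδ (S s); positivity) (by norm_num) (by norm_num) s K
      _ = 2 * δ (S s) := by
        rw [mul_assoc (δ (S s)), ← mul_pow]; norm_num; ring
  refine ⟨u, ?_, ?_⟩
  · intro i
    refine summable_of_sum_range_le (c := 2 * δ (S 0)) (fun _ => norm_nonneg _) fun K => ?_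
    have := htail 0 i K
    simpa [hS0] using this
  · intro t ht m q k ε hε n0
    have hlim : ∀ᶠ s : ℕ in Filter.atTop, 1 / ((s : ℝ) + 1) + 2 * (1 / 2 : ℝ) ^ (s + 1) < ε := by
      have h1 := tendsto_one_div_add_atTop_nhds_zero_nat (𝕜 := ℝ)
      have h2 : Filter.Tendsto (fun s : ℕ => (1 / 2 : ℝ) ^ (s + 1)) Filter.atTop (nhds 0) :=
        (tendsto_pow_atTop_nhds_zero_of_lt_one (by norm_num) (by norm_num)).comp (Filter.tendsto_add_atTop_nat 1)
      have h3 := h1.add (h2.const_mul 2)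
      exact h3.eventually_lt_const (by simpa using hε)
    obtain ⟨s0, hs0⟩ := Filter.eventually_atTop.1 hlim
    have hinf : Set.Infinite {s | (e s).2 = (m, q, k)} := by
      have hsub : Set.univ ⊆ (fun s => (e s).1) '' {s | (e s).2 = (m, q, k)} := by
        intro a _
        obtain ⟨s, hs⟩ := he (a, (m, q, k))
        exact ⟨s, by simp [hs], by simp [hs]⟩
      intro hfin
      exact Set.infinite_univ ((hfin.image _).subset hsub)
    obtain ⟨s, hs, hsgt⟩ := hinf.exists_gt (max s0 n0)
    have hss0 := hs0 s (by omega)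
    obtain ⟨N, hN1, hN2, hN3⟩ := hW3 s (S s) t ht
    rw [← hS1] at hN2
    have hsS := hSge s
    refine ⟨N, by omega, fun i K => ?_⟩
    have hs' : (e s).2 = (m, q, k) := hs
    simp only [hs'] at hN3
    have hg1 : 1 ≤ γ t i := le_trans (one_le_pow₀ hc.le) (hlam i t ht)
    have hgΛ := hΛ i t ht
    have hpt : ∀ n, ‖(γ t i : ℂ) ^ N * u i (N + n) ^ (m + 1) - target q k i n‖ ≤
        ‖(γ t i : ℂ) ^ N * w s i (N + n) ^ (m + 1) - target q k i n‖ +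
        Λ ^ (S (s + 1)) * (if N + n < S (s + 1) then 0 else ‖u i (N + n)‖) := by
      intro n
      split_ifs with h
      · rw [hu s i (N + n) (by omega) h]; simp
      · have hw0 : w s i (N + n) = 0 := by
          by_contra h'
          exact h (hw1 s i _ h').2
        rw [hw0]
        have hle1 : ‖u i (N + n)‖ ≤ 1 := by
          have h1 := htail (s + 1) i (N + n + 1)
          have h2 := Finset.single_le_sum (f := fun k => if k < S (s + 1) then 0 else ‖u i k‖)
            (s := range (N + n + 1)) (fun k _ => by split_ifs <;> positivity)
            (Finset.mem_range.2 (Nat.lt_succ_self (N + n)))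
          simp only [if_neg h] at h2
          have h3 : δ (S (s + 1)) ≤ 1 / 2 := by
            have h4 : (2 * Λ)⁻¹ ≤ 1 / 2 := by
              rw [one_div]; gcongr; linarith
            have h5 : S (s + 1) ≠ 0 := by have := hSlt s; omega
            exact (pow_le_of_le_one (by positivity) (by linarith) h5).trans h4
          linarith
        have h6 : ‖u i (N + n)‖ ^ (m + 1) ≤ ‖u i (N + n)‖ :=
          pow_le_of_le_one (norm_nonneg _) hle1 (by omega)
        have h7 : γ t i ^ N ≤ Λ ^ (S (s + 1)) :=
          (pow_le_pow_left₀ (by linarith) hgΛ N).trans (pow_le_pow_right₀ hΛ1 (by omega))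
        calc _ ≤ ‖(γ t i : ℂ) ^ N * u i (N + n) ^ (m + 1)‖ + ‖target q k i n‖ := norm_sub_le _ _
          _ = γ t i ^ N * ‖u i (N + n)‖ ^ (m + 1) + ‖target q k i n‖ := by
            rw [norm_mul, norm_pow, norm_pow, Complex.norm_real, Real.norm_of_nonneg (by linarith)]
          _ ≤ Λ ^ (S (s + 1)) * ‖u i (N + n)‖ + ‖target q k i n‖ := by gcongr
          _ = _ := by simp [add_comm]
    refine (Finset.sum_le_sum fun n _ => hpt n).trans ?_
    rw [Finset.sum_add_distrib, ← Finset.mul_sum]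
    have hA := hN3 i K
    have hB : ∑ n ∈ range K, (if N + n < S (s + 1) then 0 else ‖u i (N + n)‖) ≤ 2 * δ (S (s + 1)) := by
      refine le_trans ?_ (htail (s + 1) i (N + K))
      rw [Finset.sum_range_add]
      apply le_add_of_nonneg_left
      apply Finset.sum_nonneg
      intro k _; split_ifs <;> positivity
    have hC : Λ ^ (S (s + 1)) * (2 * δ (S (s + 1))) ≤ 2 * (1 / 2 : ℝ) ^ (s + 1) := by
      have h1 : Λ ^ (S (s + 1)) * (2 * δ (S (s + 1))) = 2 * (1 / 2 : ℝ) ^ (S (s + 1)) := by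
        simp only [δ]
        rw [inv_pow, mul_pow, one_div, inv_pow]
        field_simp
      rw [h1]
      exact mul_le_mul_of_nonneg_left
        (pow_le_pow_of_le_one (by norm_num) (by norm_num) (hSge _)) (by norm_num)
    have hD : Λ ^ (S (s + 1)) * ∑ n ∈ range K, (if N + n < S (s + 1) then 0 else ‖u i (N + n)‖) ≤
      Λ ^ (S (s + 1)) * (2 * δ (S (s + 1))) := by gcongr
    have hA' : ∑ n ∈ range K, ‖(γ t i : ℂ) ^ N * w s i (N + n) ^ (m + 1) - target q k i n‖ ≤ 1 / ((s : ℝ) + 1) := hA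
    linarith

lemma lp_norm_le {p : ℝ≥0∞} [Fact (1 ≤ p)] (hp : p ≠ ⊤) (x : lpC p) (C : ℝ)
    (h : ∀ K, ∑ n ∈ range K, ‖x n‖ ≤ C) : ‖x‖ ≤ C := by
  have h1 := (lp.hasSum_single hp x).tendsto_sum_nat.norm
  refine le_of_tendsto h1 (Filter.Eventually.of_forall fun K => ?_)
  refine (norm_sum_le _ _).trans (le_trans (le_of_eq ?_) (h K))
  apply Finset.sum_congr rfl
  intro n _
  exact lp.norm_single (zero_lt_one.trans_le Fact.out) n _

lemma truncate_apply {p : ℝ≥0∞} [Fact (1 ≤ p)] (x : lpC p) (q n : ℕ) :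
    (∑ k ∈ range q, lp.single p k (x k) : lpC p) n = if n < q then x n else 0 := by
  induction q with
  | zero => simp
  | succ q ih =>
    rw [Finset.sum_range_succ, lp.coeFn_add, Pi.add_apply, ih]
    rcases lt_trichotomy n q with h | h | h
    · rw [if_pos h, if_pos (by omega), lp.single_apply_ne _ _ _ h.ne, add_zero]
    · subst h
      simp
    · rw [if_neg (by omega), if_neg (by omega), lp.single_apply_ne _ _ _ h.ne', add_zero]

lemma shift_pow_apply {p : ℝ≥0∞} [Fact (1 ≤ p)] {T : (Fin 2 → lpC p) →L[ℂ] (Fin 2 → lpC p)}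
    {lam : Fin 2 → ℝ} (hT : IsProductShift p 2 (fun a _n => a) T lam) (N : ℕ) :
    ∀ (x : Fin 2 → lpC p) (i : Fin 2) (n : ℕ),
      ((T ^ N) x) i n = (lam i : ℂ) ^ N * x i (N + n) := by
  induction N with
  | zero => intro x i n; simp
  | succ N ih =>
    intro x i n
    rw [pow_succ, mul_apply_eq_comp, ih, hT, pow_succ, mul_assoc, show N + 1 + n = N + n + 1 by ring]

lemma eval_summable {f : ℕ → ℂ} (hf : Summable fun n => ‖f n‖) (P : Polynomial ℂ)
    (hP : P.coeff 0 = 0) : Summable fun n => ‖P.eval (f n)‖ := by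
  obtain ⟨R, rfl⟩ := Polynomial.X_dvd_iff.2 hP
  have hf0 : Filter.Tendsto f Filter.atTop (nhds 0) :=
    tendsto_zero_iff_norm_tendsto_zero.2 hf.tendsto_atTop_zero
  have h1 : Filter.Tendsto (fun n => R.eval (f n)) Filter.atTop (nhds (R.eval 0)) :=
    (R.continuous.tendsto 0).comp hf0
  have h2 := h1.isBigO_one ℝ
  have h3 : (fun n => f n * R.eval (f n)) =O[Filter.atTop] (fun n => ‖f n‖ * (1 : ℝ)) :=
    (Asymptotics.isBigO_refl f _).norm_right.mul h2
  simp only [Polynomial.eval_mul, Polynomial.eval_X]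
  refine summable_of_isBigO_nat (g := fun n => ‖f n‖) hf ?_
  simpa using h3.norm_left

lemma hyper {p : ℝ≥0∞} [Fact (1 ≤ p)] (hp : p ≠ ⊤) (lam : Fin 2 → ℝ)
    (T : (Fin 2 → lpC p) →L[ℂ] (Fin 2 → lpC p))
    (hT : IsProductShift p 2 (fun a _n => a) T lam)
    (u : Fin 2 → ℕ → ℂ) (hu : ∀ i, Summable fun n => ‖u i n‖)
    (hcore : ∀ m q k : ℕ, ∀ ε : ℝ, 0 < ε → ∀ n0 : ℕ, ∃ N, n0 ≤ N ∧
        ∀ i K, ∑ n ∈ range K, ‖(lam i : ℂ) ^ N * u i (N + n) ^ (m + 1) - target q k i n‖ ≤ ε)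
    (P : Polynomial ℂ) (hP : P ≠ 0) (hP0 : P.coeff 0 = 0) (x : Fin 2 → lpC p)
    (hx : ∀ i n, x i n = P.eval (u i n)) :
    Dense (Set.range fun n : ℕ => (T ^ (n + 1)) x) := by
  rw [Metric.dense_iff]
  intro y r hr
  obtain ⟨m', Q, hPQ, hQ⟩ : ∃ (m : ℕ) (Q : Polynomial ℂ), P = Polynomial.X ^ m * Q ∧ ¬ Polynomial.X ∣ Q := by
    obtain ⟨Q, h1, h2⟩ := Polynomial.exists_eq_pow_rootMultiplicity_mul_and_not_dvd P hP 0
    simp only [map_zero, sub_zero] at h1 h2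
    exact ⟨_, Q, h1, h2⟩
  have hm' : m' ≠ 0 := by
    rintro rfl
    rw [Polynomial.X_dvd_iff] at hQ
    apply hQ
    rw [← hP0, hPQ]; simp
  obtain ⟨m, rfl⟩ := Nat.exists_eq_succ_of_ne_zero hm'
  set c := Q.eval 0 with hc
  have hc0 : c ≠ 0 := by
    rwa [Polynomial.X_dvd_iff, Polynomial.coeff_zero_eq_eval_zero] at hQ
  have hcn : 0 < ‖c‖ := norm_pos_iff.2 hc0
  -- truncation
  have htr : ∀ i, ∀ᶠ q in Filter.atTop, ‖(∑ k ∈ range q, lp.single p k (y i k) : lpC p) - y i‖ < r / 4 := by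
    intro i
    have h1 := (lp.hasSum_single hp (y i)).tendsto_sum_nat
    have h2 := (Metric.tendsto_nhds.1 h1) (r / 4) (by positivity)
    simpa only [dist_eq_norm] using h2
  obtain ⟨q, hq⟩ := (Filter.eventually_all.2 htr).exists
  -- the target
  let z : Fin 2 → Fin q → ℂ := fun i j => y i j / c
  obtain ⟨k, hk⟩ := (TopologicalSpace.denseRange_denseSeq (Fin 2 → Fin q → ℂ)).exists_dist_lt z
    (ε := r / (4 * (q * ‖c‖ + 1))) (by positivity)
  have hv1 : ∀ i n, ‖c * target q k i n - (if n < q then y i n else 0)‖ ≤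
      if n < q then ‖c‖ * (r / (4 * (q * ‖c‖ + 1))) else 0 := by
    intro i n
    unfold target
    split_ifs with h
    · have h1 : c * TopologicalSpace.denseSeq (Fin 2 → Fin q → ℂ) k i ⟨n, h⟩ - y i n =
        c * (TopologicalSpace.denseSeq (Fin 2 → Fin q → ℂ) k i ⟨n, h⟩ - z i ⟨n, h⟩) := by
        simp only [z]; field_simp
      rw [h1, norm_mul]
      gcongr
      rw [← dist_eq_norm, dist_comm]
      exact ((dist_le_pi_dist _ _ _).trans (dist_le_pi_dist z _ i)).trans hk.le
    · simp
  have hv2 : ∀ i K, ∑ n ∈ range K, ‖c * target q k i n - (if n < q then y i n else 0)‖ ≤ r / 4 := by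
    intro i K
    refine (Finset.sum_le_sum fun n _ => hv1 i n).trans ?_
    rw [← Finset.sum_filter, Finset.sum_const, nsmul_eq_mul]
    have hcard : (((range K).filter (· < q)).card : ℝ) ≤ q := by
      have : ((range K).filter (· < q)).card ≤ (range q).card :=
        Finset.card_le_card (by intro n; simp)
      rw [Finset.card_range] at this
      exact_mod_cast this
    calc _ ≤ (q : ℝ) * (‖c‖ * (r / (4 * (q * ‖c‖ + 1)))) := by gcongr
      _ = (r / 4) * ((q * ‖c‖) / (q * ‖c‖ + 1)) := by field_simp
      _ ≤ (r / 4) * 1 := by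
        gcongr
        rw [div_le_one (by positivity)]; linarith
      _ = _ := mul_one _
  obtain ⟨B, hB0, hB⟩ : ∃ B : ℝ, 0 ≤ B ∧ ∀ i K, ∑ n ∈ range K, ‖target q k i n‖ ≤ B := by
    refine ⟨∑ i, ∑ n ∈ range q, ‖target q k i n‖, by positivity, fun i K => ?_⟩
    calc ∑ n ∈ range K, ‖target q k i n‖ ≤ ∑ n ∈ range (q + K), ‖target q k i n‖ := by
          apply Finset.sum_le_sum_of_subset_of_nonneg
          · intro n; simp only [Finset.mem_range]; omega
          · intro n _ _; positivity
      _ = ∑ n ∈ range q, ‖target q k i n‖ := by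
          rw [Finset.sum_range_add, add_eq_left]
          apply Finset.sum_eq_zero
          intro n _
          unfold target
          rw [dif_neg (by omega), norm_zero]
      _ ≤ _ := Finset.single_le_sum (f := fun i => ∑ n ∈ range q, ‖target q k i n‖)
          (fun _ _ => Finset.sum_nonneg fun _ _ => norm_nonneg _) (Finset.mem_univ i)
  let ε : ℝ := min 1 (r / (8 * ‖c‖))
  have hε : 0 < ε := by simp only [ε]; positivity
  have hε1 : ε ≤ 1 := min_le_left _ _
  have hε2 : ‖c‖ * ε ≤ r / 8 := by
    calc ‖c‖ * ε ≤ ‖c‖ * (r / (8 * ‖c‖)) := by gcongr; exact min_le_right _ _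
      _ = r / 8 := by field_simp
  let η : ℝ := r / (8 * (1 + B))
  have hη : 0 < η := by simp only [η]; positivity
  have hη2 : (1 + B) * η = r / 8 := by simp only [η]; field_simp
  have hQlim : ∀ i, ∀ᶠ n in Filter.atTop, ‖Q.eval (u i n) - c‖ < η := by
    intro i
    have hf0 : Filter.Tendsto (u i) Filter.atTop (nhds 0) :=
      tendsto_zero_iff_norm_tendsto_zero.2 (hu i).tendsto_atTop_zero
    have h1 : Filter.Tendsto (fun n => Q.eval (u i n)) Filter.atTop (nhds (Q.eval 0)) :=
      (Q.continuous.tendsto 0).comp hf0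
    simpa only [dist_eq_norm] using (Metric.tendsto_nhds.1 h1) η hη
  obtain ⟨n0, hn0⟩ := Filter.eventually_atTop.1 (Filter.eventually_all.2 hQlim)
  obtain ⟨N, hN, hNs⟩ := hcore m q k ε hε (n0 + 1)
  refine ⟨(T ^ N) x, ?_, ⟨N - 1, ?_⟩⟩
  swap
  · simp only
    rw [Nat.sub_add_cancel (by omega)]
  rw [Metric.mem_ball, dist_pi_lt_iff hr]
  intro i
  rw [dist_eq_norm]
  have hmain : ‖((T ^ N) x) i - (∑ k ∈ range q, lp.single p k (y i k) : lpC p)‖ ≤ r / 4 + r / 4 := by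
    apply lp_norm_le hp
    intro K
    have hpt : ∀ n, ‖(((T ^ N) x) i - (∑ k ∈ range q, lp.single p k (y i k) : lpC p) : lpC p) n‖ ≤
        (‖c‖ + η) * ‖(lam i : ℂ) ^ N * u i (N + n) ^ (m + 1) - target q k i n‖ + η * ‖target q k i n‖
        + ‖c * target q k i n - (if n < q then y i n else 0)‖ := by
      intro n
      rw [lp.coeFn_sub, Pi.sub_apply, shift_pow_apply hT, truncate_apply, hx, hPQ]
      simp only [Polynomial.eval_mul, Polynomial.eval_pow, Polynomial.eval_X]
      have hQn := (hn0 (N + n) (by omega) i).le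
      set a := (lam i : ℂ) ^ N * u i (N + n) ^ (m + 1) - target q k i n with ha
      set b := Q.eval (u i (N + n)) - c with hb
      have e1 : (lam i : ℂ) ^ N * (u i (N + n) ^ m.succ * Q.eval (u i (N + n))) -
          (if n < q then y i n else 0) =
          c * a + b * a + b * target q k i n + (c * target q k i n - (if n < q then y i n else 0)) := by
        rw [ha, hb]; rw [Nat.succ_eq_add_one]; ring
      rw [e1]
      refine (norm_add_le _ _).trans ?_
      gcongr
      refine (norm_add₃_le).trans ?_
      rw [norm_mul, norm_mul, norm_mul, add_mul]
      gcongr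
    refine (Finset.sum_le_sum fun n _ => hpt n).trans ?_
    rw [Finset.sum_add_distrib, Finset.sum_add_distrib, ← Finset.mul_sum, ← Finset.mul_sum]
    have h1 := hNs i K
    have h2 := hB i K
    have h3 := hv2 i K
    have h4 : (‖c‖ + η) * ∑ n ∈ range K, ‖(lam i : ℂ) ^ N * u i (N + n) ^ (m + 1) - target q k i n‖
      ≤ (‖c‖ + η) * ε := by gcongr
    have h5 : η * ∑ n ∈ range K, ‖target q k i n‖ ≤ η * B := by gcongr
    have h6 : η * ε ≤ η * 1 := by gcongr
    linarith
  have h1 := norm_sub_le_norm_sub_add_norm_sub (((T ^ N) x) i) (∑ k ∈ range q, lp.single p k (y i k) : lpC p) (y i)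
  have h2 := hq i
  linarith

/-- Example 2.11 of the paper: for a Lipschitz curve `Γ ⊆ (1,∞)²`, the family
`(λB × μB)_{(λ,μ) ∈ Γ}` on `ℓᵖ(ℕ)²` admits a common hypercyclic algebra for the
coordinatewise product, and in particular a common hypercyclic vector. -/
theorem stmt_15 (p : ℝ≥0∞) [Fact (1 ≤ p)] (hp : p ≠ ⊤)
    (γ : ℝ → (Fin 2 → ℝ)) (L : NNReal) (hγ : LipschitzOnWith L γ (Set.Icc (0 : ℝ) 1))
    (hγmem : ∀ t ∈ Set.Icc (0 : ℝ) 1, ∀ i, 1 < γ t i)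
    (T : (Fin 2 → ℝ) → ((Fin 2 → lpC p) →L[ℂ] (Fin 2 → lpC p)))
    (hT : ∀ lam ∈ γ '' Set.Icc (0 : ℝ) 1,
      IsProductShift p 2 (fun a _n => a) (T lam) lam) :
    CommonHypercyclicAlgebraCW p 2 (γ '' Set.Icc (0 : ℝ) 1) T ∧
      ∃ x : Fin 2 → lpC p, ∀ lam ∈ γ '' Set.Icc (0 : ℝ) 1,
        Dense (Set.range fun n : ℕ => ((T lam) ^ (n + 1)) x) := by
  have hL : ∀ i, ∀ s ∈ Set.Icc (0:ℝ) 1, ∀ t ∈ Set.Icc (0:ℝ) 1, |γ s i - γ t i| ≤ (L : ℝ) * |s - t| := by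
    intro i s hs t ht
    have h1 := hγ.dist_le_mul s hs t ht
    have h2 := dist_le_pi_dist (γ s) (γ t) i
    rw [Real.dist_eq] at h1 h2
    exact h2.trans h1
  have hmin : ∀ i, ∃ a : ℝ, 1 < a ∧ ∀ t ∈ Set.Icc (0:ℝ) 1, a ≤ γ t i := by
    intro i
    have hcont : ContinuousOn (fun t => γ t i) (Set.Icc (0:ℝ) 1) :=
      (continuous_apply i).comp_continuousOn hγ.continuousOn
    obtain ⟨t0, ht0, hmin⟩ := isCompact_Icc.exists_isMinOn (Set.nonempty_Icc.2 zero_le_one) hcont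
    exact ⟨γ t0 i, hγmem t0 ht0 i, fun t ht => hmin ht⟩
  choose a ha1 ha using hmin
  have hmin1 : 1 < min (a 0) (a 1) := lt_min (ha1 0) (ha1 1)
  have hc : 1 < Real.sqrt (min (a 0) (a 1)) := by
    rw [Real.lt_sqrt zero_le_one]; simpa using hmin1
  have hlam : ∀ i, ∀ t ∈ Set.Icc (0:ℝ) 1, Real.sqrt (min (a 0) (a 1)) ^ 2 ≤ γ t i := by
    intro i t ht
    rw [Real.sq_sqrt (by linarith)]
    refine le_trans ?_ (ha i t ht)
    fin_cases i
    · exact min_le_left _ _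
    · exact min_le_right _ _
  have hΛ : ∀ i, ∀ t ∈ Set.Icc (0:ℝ) 1, γ t i ≤ 1 + (|γ 0 0| + |γ 0 1|) + L := by
    intro i t ht
    have h1 := hL i t ht 0 (by simp)
    have h2 : |t - 0| ≤ 1 := by rw [sub_zero, abs_of_nonneg ht.1]; exact ht.2
    have h3 : (L : ℝ) * |t - 0| ≤ L * 1 := by gcongr
    have h4 := le_abs_self (γ t i - γ 0 i)
    have h5 : γ 0 i ≤ |γ 0 0| + |γ 0 1| := by
      fin_cases i
      · exact (le_abs_self _).trans (le_add_of_nonneg_right (abs_nonneg _))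
      · exact (le_abs_self _).trans (le_add_of_nonneg_left (abs_nonneg _))
    linarith
  obtain ⟨u, hu, hcore⟩ := core_s15 γ L L.2 hL _ hc hlam _ (by
    have h1 := abs_nonneg (γ 0 0)
    have h2 := abs_nonneg (γ 0 1)
    have h3 : (0 : ℝ) ≤ L := L.2
    linarith) hΛ
  have hyp : ∀ (P : Polynomial ℂ), P ≠ 0 → P.coeff 0 = 0 → ∀ x : Fin 2 → lpC p,
      (∀ i n, x i n = P.eval (u i n)) → ∀ lam ∈ γ '' Set.Icc (0 : ℝ) 1,
      Dense (Set.range fun n : ℕ => ((T lam) ^ (n + 1)) x) := by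
    rintro P hP hP0 x hx lam ⟨t, ht, rfl⟩
    exact hyper hp (γ t) (T (γ t)) (hT _ ⟨t, ht, rfl⟩) u hu (hcore t ht) P hP hP0 x hx
  have hex : ∀ P : Polynomial ℂ, P.coeff 0 = 0 → ∃ x : Fin 2 → lpC p, ∀ i n, x i n = P.eval (u i n) := by
    intro P hP0
    have hmem : ∀ i, Memℓp (fun n => P.eval (u i n)) p := by
      intro i
      have h1 : Memℓp (fun n => P.eval (u i n)) 1 := by
        apply memℓp_gen
        simpa using eval_summable (hu i) P hP0
      exact h1.of_exponent_ge Fact.out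
    exact ⟨fun i => ⟨_, hmem i⟩, fun i n => rfl⟩
  obtain ⟨x0, hx0⟩ := hex Polynomial.X (by simp)
  have hx0d := hyp Polynomial.X Polynomial.X_ne_zero (by simp) x0 hx0
  refine ⟨?_, x0, hx0d⟩
  refine ⟨{x | ∃ P : Polynomial ℂ, P.coeff 0 = 0 ∧ ∀ i n, x i n = P.eval (u i n)}, ?_, ?_, ?_, ?_, ?_, ?_⟩
  · exact ⟨0, by simp, fun i n => by simp⟩
  · rintro x ⟨P, hP, hxP⟩ y ⟨Q, hQ, hyQ⟩
    refine ⟨P + Q, by simp [hP, hQ], fun i n => ?_⟩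
    rw [Polynomial.eval_add, ← hxP, ← hyQ]; rfl
  · rintro b x ⟨P, hP, hxP⟩
    refine ⟨Polynomial.C b * P, by simp [hP], fun i n => ?_⟩
    rw [Polynomial.eval_mul, Polynomial.eval_C, ← hxP]; rfl
  · rintro x ⟨P, hP, hxP⟩ y ⟨Q, hQ, hyQ⟩
    have hPQ : (P * Q).coeff 0 = 0 := by simp [hP]
    obtain ⟨w, hw⟩ := hex (P * Q) hPQ
    refine ⟨w, ⟨P * Q, hPQ, hw⟩, fun i n => ?_⟩
    rw [hw, Polynomial.eval_mul, hxP, hyQ]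
  · refine ⟨x0, ⟨Polynomial.X, by simp, hx0⟩, ?_⟩
    rintro rfl
    have hd := hx0d (γ 0) ⟨0, by simp, rfl⟩
    simp only [map_zero] at hd
    rw [Set.range_const] at hd
    let y1 : Fin 2 → lpC p := fun _ => lp.single p 0 (1 : ℂ)
    have h1 : y1 ∈ closure {(0 : Fin 2 → lpC p)} := hd y1
    rw [closure_singleton, Set.mem_singleton_iff] at h1
    have h2 : (y1 0) 0 = (0 : ℂ) := by rw [h1]; rfl
    simp [y1] at h2
  · rintro x ⟨P, hP, hxP⟩ hx lam hlam
    refine hyp P ?_ hP x hxP lam hlam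
    rintro rfl
    apply hx
    funext i
    ext n
    rw [hxP]; simp
end
end
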